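/- arXiv:2408.10881 — 2 statements merged into one kernel-verified Lean document; each statement's English description precedes it below -/
import Mathlib

section
/- For every integer k ≥ 2 and every ε > 0 there exists C_ε such that for every integer C ≥ C_ε there are at least (1−ε)·C^k tuples (a₁,…,a_k) ∈ {1,…,C}^k with the following two properties: (i) the equation a₁x₁+⋯+a_kx_k = a₁x₁'+⋯+a_kx_k' has no non-trivial solutions with all 2k variables in {1,…,⌊C^{1/k−ε}⌋}; and (ii) there exists κ > 0 such that for every positive integer N there is a set A ⊆ [N] with |A| ≥ κ·N^{1/k−ε} containing no non-trivial solutions to this equation. -/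
/-- `a` is good modulo `p` up to size `L`. -/
def GoodTuple (k p L : ℕ) (a : Fin k → ℕ) : Prop :=
  ∀ y : Fin k → ℤ, (∀ i, y i ∈ Finset.Ioo (-(L : ℤ)) L) → (p : ℤ) ∣ ∑ i, (a i : ℤ) * y i → y = 0

lemma count_one (k p C : ℕ) (hp : p.Prime) (hC : C < 2 * p) (y : Fin k → ℤ) (i0 : Fin k)
    (hy : ¬ (p : ℤ) ∣ y i0) :
    ((Fintype.piFinset (fun _ : Fin k => Finset.Icc 1 C)).filter
      (fun a => (p : ℤ) ∣ ∑ i, (a i : ℤ) * y i)).card ≤ 2 * C ^ (k - 1) := by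
  classical
  have hcard : (Fintype.piFinset (fun i : Fin k => if i = i0 then Finset.range 2 else
      Finset.Icc 1 C)).card = 2 * C ^ (k - 1) := by
    rw [Fintype.card_piFinset, ← Finset.mul_prod_erase _ _ (Finset.mem_univ i0)]
    rw [Finset.prod_congr rfl (g := fun _ => C)]
    · simp
    · intro i hi
      simp [Finset.ne_of_mem_erase hi]
  rw [← hcard]
  apply Finset.card_le_card_of_injOn (fun a => Function.update a i0 (a i0 / p))
  · intro a ha
    simp only [Finset.coe_filter, Fintype.mem_piFinset, Set.mem_ofPred_eq] at ha
    simp only [Finset.mem_coe, Fintype.mem_piFinset]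
    intro i
    by_cases h : i = i0
    · subst h
      have := ha.1 i
      simp only [Finset.mem_Icc] at this
      simp only [Function.update_self, if_true, Finset.mem_range]
      rw [Nat.div_lt_iff_lt_mul hp.pos]
      omega
    · simp only [h, if_false, Function.update_of_ne, ne_eq, not_false_eq_true]
      exact ha.1 i
  · intro a ha b hb hab
    simp only [Finset.coe_filter, Fintype.mem_piFinset, Set.mem_ofPred_eq] at ha hb
    have hoff : ∀ i, i ≠ i0 → a i = b i := by
      intro i hi
      have := congrFun hab i
      simpa [hi] using this
    have hq : a i0 / p = b i0 / p := by
      have := congrFun hab i0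
      simpa using this
    have hd := dvd_sub ha.2 hb.2
    rw [← Finset.sum_sub_distrib, Finset.sum_eq_single i0] at hd
    · rw [← sub_mul] at hd
      have h2 : (p : ℤ) ∣ (a i0 : ℤ) - b i0 :=
        ((Nat.prime_iff_prime_int.mp hp).dvd_or_dvd hd).resolve_right hy
      have h3 : b i0 ≡ a i0 [MOD p] := (Nat.modEq_iff_dvd).2 h2
      have h4 : a i0 = b i0 := by
        rw [← Nat.div_add_mod (a i0) p, ← Nat.div_add_mod (b i0) p, hq, h3]
      funext i
      by_cases h : i = i0
      · rw [h, h4]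
      · exact hoff i h
    · intro i _ hi
      rw [hoff i hi]; ring
    · simp

open Classical in
lemma count_bad (k p C L : ℕ) (hp : p.Prime) (hC : C < 2 * p) (hL : L ≤ p) :
    ((Fintype.piFinset (fun _ : Fin k => Finset.Icc 1 C)).filter
      (fun a => ¬ GoodTuple k p L a)).card ≤ (2 * L) ^ k * (2 * C ^ (k - 1)) := by
  have hsub : ((Fintype.piFinset (fun _ : Fin k => Finset.Icc 1 C)).filter
      (fun a => ¬ GoodTuple k p L a)) ⊆
      ((Fintype.piFinset (fun _ : Fin k => Finset.Ioo (-(L : ℤ)) L)).erase 0).biUnion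
      (fun y => (Fintype.piFinset (fun _ : Fin k => Finset.Icc 1 C)).filter
      (fun a => (p : ℤ) ∣ ∑ i, (a i : ℤ) * y i)) := by
    intro a ha
    rw [Finset.mem_filter] at ha
    obtain ⟨h1, h2⟩ := ha
    unfold GoodTuple at h2
    push Not at h2
    obtain ⟨y, hy, hd, h0⟩ := h2
    rw [Finset.mem_biUnion]
    exact ⟨y, Finset.mem_erase.2 ⟨h0, Fintype.mem_piFinset.2 hy⟩, Finset.mem_filter.2 ⟨h1, hd⟩⟩
  refine (Finset.card_le_card hsub).trans ?_
  refine (Finset.card_biUnion_le_card_mul _ _ (2 * C ^ (k - 1)) ?_).trans ?_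
  · intro y hy
    rw [Finset.mem_erase, Fintype.mem_piFinset] at hy
    obtain ⟨i0, hi0⟩ := Function.ne_iff.1 hy.1
    apply count_one k p C hp hC y i0
    intro hd
    have h := hy.2 i0
    rw [Finset.mem_Ioo] at h
    apply hi0
    apply Int.eq_zero_of_abs_lt_dvd hd
    rw [abs_lt]
    constructor <;> omega
  · apply Nat.mul_le_mul_right
    refine (Finset.card_erase_le).trans ?_
    rw [Fintype.card_piFinset]
    simp only [Int.card_Ioo, Finset.prod_const, Finset.card_univ, Fintype.card_fin]
    apply Nat.pow_le_pow_left
    omega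

lemma digit_set (k p L : ℕ) (hp : 0 < p) (hL : L ≤ p) (a : Fin k → ℕ)
    (ha : GoodTuple k p L a) (n : ℕ) :
    ∃ A : Finset ℤ, A ⊆ Finset.Ico 0 ((p : ℤ) ^ n) ∧ A.card = L ^ n ∧
      ∀ x x' : Fin k → ℤ, (∀ i, x i ∈ A) → (∀ i, x' i ∈ A) →
                ∑ i, (a i : ℤ) * x i = ∑ i, (a i : ℤ) * x' i → x = x' := by
  classical
  induction n with
  | zero =>
    refine ⟨{0}, by simp, by simp, ?_⟩
    intro x x' hx hx' _
    funext i
    have h1 := hx i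
    have h2 := hx' i
    rw [Finset.mem_singleton] at h1 h2
    rw [h1, h2]
  | succ n ih =>
    obtain ⟨A, hA, hc, hf⟩ := ih
    refine ⟨((Finset.Ico (0 : ℤ) L) ×ˢ A).image (fun z => z.1 + p * z.2), ?_, ?_, ?_⟩
    · intro z hz
      rw [Finset.mem_image] at hz
      obtain ⟨⟨d, u⟩, hdu, rfl⟩ := hz
      rw [Finset.mem_product] at hdu
      have hu := hA hdu.2
      have hd := hdu.1
      simp only [Finset.mem_Ico] at hu hd ⊢
      have hp' : (0 : ℤ) < p := by exact_mod_cast hp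
      have hL' : (L : ℤ) ≤ p := by exact_mod_cast hL
      constructor
      · have := mul_nonneg hp'.le hu.1
        linarith
      · have : (p : ℤ) * (u + 1) ≤ p * p ^ n := by
          apply mul_le_mul_of_nonneg_left _ hp'.le
          omega
        rw [pow_succ]
        linarith
    · rw [Finset.card_image_of_injOn]
      · rw [Finset.card_product, hc]
        simp [pow_succ, mul_comm]
      · rintro ⟨d, u⟩ h ⟨d', u'⟩ h' he
        simp only [Finset.coe_product, Set.mem_prod, Finset.mem_coe, Finset.mem_Ico] at h h'
        simp only at he
        have hp' : (0 : ℤ) < p := by exact_mod_cast hp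
        have hL' : (L : ℤ) ≤ p := by exact_mod_cast hL
        have h1 : d - d' = 0 := by
          apply Int.eq_zero_of_abs_lt_dvd (m := (p : ℤ))
          · exact ⟨u' - u, by linarith⟩
          · rw [abs_lt]; constructor <;> linarith [h.1.1, h.1.2, h'.1.1, h'.1.2]
        have h2 : (p : ℤ) * u = p * u' := by linarith
        have h3 := mul_left_cancel₀ hp'.ne' h2
        rw [Prod.mk.injEq]
        exact ⟨by linarith, h3⟩
    · intro x x' hx hx' hs
      simp only [Finset.mem_image, Finset.mem_product, Prod.exists, Finset.mem_Ico] at hx hx'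
      choose d u hdu hx using hx
      choose d' u' hdu' hx' using hx'
      have hp' : (0 : ℤ) < p := by exact_mod_cast hp
      have e1 : ∑ i, (a i : ℤ) * x i = ∑ i, (a i : ℤ) * d i + p * ∑ i, (a i : ℤ) * u i := by
        rw [Finset.mul_sum, ← Finset.sum_add_distrib]
        apply Finset.sum_congr rfl
        intro i _
        rw [← hx i]; ring
      have e2 : ∑ i, (a i : ℤ) * x' i = ∑ i, (a i : ℤ) * d' i + p * ∑ i, (a i : ℤ) * u' i := by
        rw [Finset.mul_sum, ← Finset.sum_add_distrib]
        apply Finset.sum_congr rfl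
        intro i _
        rw [← hx' i]; ring
      have e3 : ∑ i, (a i : ℤ) * (d i - d' i) =
          ∑ i, (a i : ℤ) * d i - ∑ i, (a i : ℤ) * d' i := by
        rw [← Finset.sum_sub_distrib]
        apply Finset.sum_congr rfl
        intro i _
        ring
      have h0 : (fun i => d i - d' i) = 0 := by
        apply ha
        · intro i
          rw [Finset.mem_Ioo]
          have h1 := (hdu i).1
          have h2 := (hdu' i).1
          constructor <;> linarith [h1.1, h1.2, h2.1, h2.2]
        · refine ⟨∑ i, (a i : ℤ) * u' i - ∑ i, (a i : ℤ) * u i, ?_⟩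
          rw [e3]
          linarith
      have hd : d = d' := by
        funext i
        have := congrFun h0 i
        simp only [Pi.zero_apply] at this
        linarith
      have hu : u = u' := by
        apply hf u u' (fun i => (hdu i).2) (fun i => (hdu' i).2)
        apply mul_left_cancel₀ hp'.ne'
        rw [hd] at e1
        linarith
      funext i
      rw [← hx i, ← hx' i, hd, hu]

lemma good_imp_two (k p L : ℕ) (hp : p.Prime) (hL : L ≤ p) (a : Fin k → ℕ)
    (ha : GoodTuple k p L a) (α : ℝ) (hα : 0 ≤ α) (hpL : (p : ℝ) ^ α ≤ L) :
    ∃ κ : ℝ, 0 < κ ∧ ∀ N : ℕ, 0 < N → ∃ A : Finset ℤ,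
              A ⊆ Finset.Icc 1 (N : ℤ) ∧
              κ * (N : ℝ) ^ α ≤ A.card ∧
              ∀ x x' : Fin k → ℤ, (∀ i, x i ∈ A) → (∀ i, x' i ∈ A) →
                ∑ i, (a i : ℤ) * x i = ∑ i, (a i : ℤ) * x' i → x = x' := by
  classical
  have hp0 : (0 : ℝ) < p := by exact_mod_cast hp.pos
  have hpa : 0 < (p : ℝ) ^ α := Real.rpow_pos_of_pos hp0 _
  refine ⟨((p : ℝ) ^ α)⁻¹, by positivity, ?_⟩
  intro N hN
  obtain ⟨A, hA, hc, hf⟩ := digit_set k p L hp.pos hL a ha (Nat.log p N)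
  have hlog : p ^ (Nat.log p N) ≤ N := Nat.pow_log_le_self p hN.ne'
  have hlog2 : N < p ^ (Nat.log p N + 1) := Nat.lt_pow_succ_log_self hp.one_lt N
  refine ⟨A.image (fun z => z + 1), ?_, ?_, ?_⟩
  · intro z hz
    rw [Finset.mem_image] at hz
    obtain ⟨u, hu, rfl⟩ := hz
    have h := hA hu
    rw [Finset.mem_Ico] at h
    rw [Finset.mem_Icc]
    have : ((p : ℤ) ^ (Nat.log p N)) ≤ N := by exact_mod_cast hlog
    constructor <;> linarith [h.1, h.2]
  · rw [Finset.card_image_of_injective _ (add_left_injective 1), hc]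
    have h1 : (N : ℝ) ^ α ≤ ((p : ℝ) ^ α) ^ (Nat.log p N + 1) := by
      rw [← Real.rpow_natCast, ← Real.rpow_mul hp0.le, mul_comm, Real.rpow_mul hp0.le,
        Real.rpow_natCast]
      apply Real.rpow_le_rpow (by positivity) _ hα
      exact_mod_cast hlog2.le
    rw [inv_mul_le_iff₀ hpa]
    refine h1.trans ?_
    rw [pow_succ, mul_comm]
    push_cast
    gcongr
  · intro x x' hx hx' hs
    have hm : ∀ z : ℤ, z ∈ A.image (fun z => z + 1) → z - 1 ∈ A := by
      intro z hz
      rw [Finset.mem_image] at hz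
      obtain ⟨u, hu, rfl⟩ := hz
      simpa using hu
    have := hf (fun i => x i - 1) (fun i => x' i - 1) (fun i => hm _ (hx i))
      (fun i => hm _ (hx' i)) (by simp only [mul_sub, Finset.sum_sub_distrib, hs])
    funext i
    have := congrFun this i
    linarith


/-- For every integer `k ≥ 2` and every `ε > 0` there exists `Cε` such that for every
integer `C ≥ Cε` there are at least `(1−ε)·C^k` tuples `(a₁,…,a_k) ∈ {1,…,C}^k` such that
(i) the equation `a₁x₁+⋯+a_kx_k = a₁x₁'+⋯+a_kx_k'` has no non-trivial solutions with all variables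
in `{1,…,⌊C^{1/k−ε}⌋}`, and (ii) there is `κ > 0` such that for every positive integer `N`
there is a set `A ⊆ [N]` of size at least `κ·N^{1/k−ε}` with no non-trivial solutions. -/
theorem statement0 (k : ℕ) (hk : 2 ≤ k) (ε : ℝ) (hε : 0 < ε) :
    ∃ Cε : ℕ, ∀ C : ℕ, Cε ≤ C →
      (1 - ε) * (C : ℝ) ^ k ≤
        (Set.ncard {a : Fin k → ℕ |
          (∀ i, a i ∈ Finset.Icc 1 C) ∧
          (∀ x x' : Fin k → ℤ,
              (∀ i, x i ∈ Finset.Icc (1 : ℤ) (⌊(C : ℝ) ^ ((1 : ℝ) / k - ε)⌋₊ : ℤ)) →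
              (∀ i, x' i ∈ Finset.Icc (1 : ℤ) (⌊(C : ℝ) ^ ((1 : ℝ) / k - ε)⌋₊ : ℤ)) →
              ∑ i, (a i : ℤ) * x i = ∑ i, (a i : ℤ) * x' i → x = x') ∧
          (∃ κ : ℝ, 0 < κ ∧ ∀ N : ℕ, 0 < N → ∃ A : Finset ℤ,
              A ⊆ Finset.Icc 1 (N : ℤ) ∧
              κ * (N : ℝ) ^ ((1 : ℝ) / k - ε) ≤ A.card ∧
              ∀ x x' : Fin k → ℤ, (∀ i, x i ∈ A) → (∀ i, x' i ∈ A) →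
                ∑ i, (a i : ℤ) * x i = ∑ i, (a i : ℤ) * x' i → x = x')} : ℝ) := by
  classical
  have hk0 : (0 : ℝ) < k := by exact_mod_cast (by omega : 0 < k)
  have hcardall : ∀ C : ℕ, (Fintype.piFinset (fun _ : Fin k => Finset.Icc 1 C)).card = C ^ k := by
    intro C; simp
  rcases le_or_gt ((1 : ℝ) / k - ε) 0 with hα | hα
  · refine ⟨1, fun C hC => ?_⟩
    have hC1 : (1 : ℝ) ≤ C := by exact_mod_cast hC
    have hfl : ⌊(C : ℝ) ^ ((1 : ℝ) / k - ε)⌋₊ ≤ 1 := by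
      apply Nat.floor_le_of_le
      simpa using Real.rpow_le_one_of_one_le_of_nonpos hC1 hα
    refine le_trans (?_ : _ ≤ (C : ℝ) ^ k) ?_
    · have : (0 : ℝ) ≤ (C : ℝ) ^ k := by positivity
      nlinarith
    · rw [← Nat.cast_pow, ← hcardall C, ← Set.ncard_coe_finset]
      rw [Nat.cast_le]
      apply Set.ncard_le_ncard
      · intro a ha
        simp only [Finset.mem_coe, Fintype.mem_piFinset] at ha
        refine ⟨ha, ?_, 1, one_pos, ?_⟩
        · intro x x' hx hx' _
          funext i
          have h1 := hx i
          have h2 := hx' i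
          rw [Finset.mem_Icc] at h1 h2
          push_cast at h1 h2
          omega
        · intro N hN
          refine ⟨{1}, ?_, ?_, ?_⟩
          · intro z hz
            rw [Finset.mem_singleton] at hz
            rw [Finset.mem_Icc]
            omega
          · have hN1 : (1 : ℝ) ≤ N := by exact_mod_cast hN
            simpa using Real.rpow_le_one_of_one_le_of_nonpos hN1 hα
          · intro x x' hx hx' _
            funext i
            have h1 := hx i
            have h2 := hx' i
            rw [Finset.mem_singleton] at h1 h2
            rw [h1, h2]
      · apply Set.Finite.subset (Finset.finite_toSet (Fintype.piFinset (fun _ : Fin k => Finset.Icc 1 C)))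
        intro a ha
        simp only [Finset.mem_coe, Fintype.mem_piFinset]
        exact ha.1
  · set α : ℝ := (1 : ℝ) / k - ε with hαdef
    have hlim : Filter.Tendsto (fun C : ℕ => 2 * 4 ^ k * (C : ℝ) ^ (-(k * ε))) Filter.atTop
        (nhds (2 * 4 ^ k * 0)) :=
      (((tendsto_rpow_neg_atTop (mul_pos hk0 hε)).comp tendsto_natCast_atTop_atTop)).const_mul _
    rw [mul_zero] at hlim
    obtain ⟨C0, hC0⟩ := Filter.eventually_atTop.1 (hlim.eventually_le_const hε)
    refine ⟨max C0 16, fun C hC => ?_⟩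
    have hsmall := hC0 C (le_trans (le_max_left _ _) hC)
    have hC16 : 16 ≤ C := le_trans (le_max_right _ _) hC
    have hC16' : (16 : ℝ) ≤ C := by exact_mod_cast hC16
    have hCpos : (0 : ℝ) < C := by linarith
    obtain ⟨p, hp, hp1, hp2⟩ := Nat.exists_prime_lt_and_le_two_mul (C / 2) (by omega)
    have hpC : p ≤ C := by omega
    have hCp : C < 2 * p := by omega
    set L : ℕ := ⌈(C : ℝ) ^ α⌉₊ with hLdef
    have hCL : (C : ℝ) ^ α ≤ L := Nat.le_ceil _
    have hLC : (L : ℝ) < (C : ℝ) ^ α + 1 := Nat.ceil_lt_add_one (by positivity)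
    have hα2 : α ≤ 1 / 2 := by
      have : (1 : ℝ) / k ≤ 1 / 2 := by
        apply one_div_le_one_div_of_le (by norm_num)
        exact_mod_cast hk
      linarith
    have hsq : (C : ℝ) ^ α ≤ √C := by
      rw [Real.sqrt_eq_rpow]
      exact Real.rpow_le_rpow_of_exponent_le (by linarith) hα2
    have hLp : L ≤ p := by
      have h4 : 4 ≤ √(C : ℝ) := by
        apply Real.le_sqrt_of_sq_le; linarith
      have h5 : √(C : ℝ) * √C = C := Real.mul_self_sqrt hCpos.le
      have h6 : (C : ℝ) < 2 * p := by exact_mod_cast hCp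
      have : (L : ℝ) ≤ p := by nlinarith
      exact_mod_cast this
    have hpL : (p : ℝ) ^ α ≤ L := by
      refine le_trans ?_ hCL
      apply Real.rpow_le_rpow (by positivity) (by exact_mod_cast hpC) hα.le
    have hbad := count_bad k p C L hp hCp hLp
    have hsplit := Finset.card_filter_add_card_filter_not
      (s := Fintype.piFinset (fun _ : Fin k => Finset.Icc 1 C)) (fun a => GoodTuple k p L a)
    rw [hcardall C] at hsplit
    have hone : 1 ≤ (C : ℝ) ^ α := Real.one_le_rpow (by linarith) hα.le
    have hbound : ((2 * L : ℝ)) ^ k * (2 * (C : ℝ) ^ (k - 1)) ≤ ε * (C : ℝ) ^ k := by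
      have h1 : (2 * L : ℝ) ^ k ≤ (4 * (C : ℝ) ^ α) ^ k := by
        apply pow_le_pow_left₀ (by positivity)
        linarith
      have h2 : (4 * (C : ℝ) ^ α) ^ k = 4 ^ k * ((C : ℝ) ^ (-(k * ε)) * C) := by
        rw [mul_pow]
        congr 1
        rw [← Real.rpow_natCast, ← Real.rpow_mul hCpos.le]
        conv_rhs => rw [← Real.rpow_add_one hCpos.ne']
        congr 1
        rw [hαdef]
        field_simp
        ring
      have h3 : (C : ℝ) ^ k = C * (C : ℝ) ^ (k - 1) := by
        rw [← pow_succ']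
        congr 1
        omega
      calc ((2 * L : ℝ)) ^ k * (2 * (C : ℝ) ^ (k - 1))
          ≤ (4 ^ k * ((C : ℝ) ^ (-(k * ε)) * C)) * (2 * (C : ℝ) ^ (k - 1)) := by
            rw [← h2]; gcongr
        _ = (2 * 4 ^ k * (C : ℝ) ^ (-(k * ε))) * (C : ℝ) ^ k := by rw [h3]; ring
        _ ≤ ε * (C : ℝ) ^ k := by gcongr
    refine le_trans (?_ : _ ≤ ((((Fintype.piFinset (fun _ : Fin k => Finset.Icc 1 C)).filter
      (fun a => GoodTuple k p L a)).card : ℕ) : ℝ)) ?_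
    · have h1 : (((((Fintype.piFinset (fun _ : Fin k => Finset.Icc 1 C)).filter
        (fun a => ¬ GoodTuple k p L a)).card : ℕ) : ℝ)) ≤
          ((2 * L : ℝ)) ^ k * (2 * (C : ℝ) ^ (k - 1)) := by exact_mod_cast hbad
      have h2 := congrArg (Nat.cast (R := ℝ)) hsplit
      push_cast at h2
      linarith
    · rw [← Set.ncard_coe_finset]
      rw [Nat.cast_le]
      apply Set.ncard_le_ncard
      · intro a ha
        rw [Finset.mem_coe, Finset.mem_filter, Fintype.mem_piFinset] at ha
        obtain ⟨ha, hg⟩ := ha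
        refine ⟨ha, ?_, good_imp_two k p L hp hLp a hg α hα.le hpL⟩
        intro x x' hx hx' hs
        have hfl : ⌊(C : ℝ) ^ α⌋₊ ≤ L := Nat.floor_le_ceil _
        have h0 : (fun i => x i - x' i) = 0 := by
          apply hg
          · intro i
            have h1 := hx i
            have h2 := hx' i
            rw [Finset.mem_Icc] at h1 h2
            rw [Finset.mem_Ioo]
            constructor <;> omega
          · simp only [mul_sub, Finset.sum_sub_distrib, hs, sub_self, dvd_zero]
        funext i
        have := congrFun h0 i
        simp only [Pi.zero_apply] at this
        linarith
      · apply Set.Finite.subset (Finset.finite_toSet (Fintype.piFinset (fun _ : Fin k => Finset.Icc 1 C)))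
        intro a ha
        simp only [Finset.mem_coe, Fintype.mem_piFinset]
        exact ha.1
end

section
/- Let k ≥ 4 be an integer, let a₁,…,a_k be positive integers and set a = a₁ + a₂ + ⋯ + a_k. Then there exist constants C, c > 0 such that for every integer N ≥ 3, every set A ⊆ [N] containing no non-trivial solutions to the equation a₁x₁ + a₂x₂ + ⋯ + a_kx_k + a·y = a·z + a·w satisfies |A| ≤ C · N^{1/2} · exp(−c·(log log N)^{1/7}). -/
lemma tail_aux {F : Type*} [DecidableEq F] (A : Finset F) (h : F → Prop) [DecidablePred h] (m : ℕ)
    (hP : 4 * (A.filter h).card ≤ A.card) :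
    (((Fintype.piFinset (fun _ : Fin m => A)).filter
      (fun y => m ≤ 2 * (Finset.univ.filter (fun j => h (y j))).card)).card : ℝ)
      ≤ (7/8 : ℝ)^m * (A.card : ℝ)^m := by
  have h1 : ∑ y ∈ Fintype.piFinset (fun _ : Fin m => A),
      ∏ j, (if h (y j) then (4:ℝ) else 1) = ((A.card : ℝ) + 3 * (A.filter h).card)^m := by
    rw [← Finset.prod_univ_sum (fun _ : Fin m => A) (fun _ y => if h y then (4:ℝ) else 1)]
    rw [Finset.prod_const, Finset.card_univ, Fintype.card_fin]
    congr 1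
    have : ∀ y, (if h y then (4:ℝ) else 1) = 1 + 3 * (if h y then 1 else 0) := by
      intro y; split_ifs <;> norm_num
    simp_rw [this]
    rw [Finset.sum_add_distrib, ← Finset.mul_sum, Finset.sum_boole]
    simp
  have h2 : ((A.card : ℝ) + 3 * (A.filter h).card) ≤ 7/4 * A.card := by
    have : (4 * (A.filter h).card : ℝ) ≤ A.card := by exact_mod_cast hP
    linarith
  have h3 : ((A.card : ℝ) + 3 * (A.filter h).card)^m ≤ (7/4 * A.card)^m := by
    gcongr
  have h4 : (((Fintype.piFinset (fun _ : Fin m => A)).filter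
      (fun y => m ≤ 2 * (Finset.univ.filter (fun j => h (y j))).card)).card : ℝ) * 2^m ≤
      ∑ y ∈ Fintype.piFinset (fun _ : Fin m => A), ∏ j, (if h (y j) then (4:ℝ) else 1) := by
    rw [← nsmul_eq_mul, ← Finset.sum_const]
    refine (Finset.sum_le_sum (fun y hy => ?_)).trans
      (Finset.sum_le_sum_of_subset_of_nonneg (Finset.filter_subset _ _) ?_)
    · rw [Finset.mem_filter] at hy
      rw [Finset.prod_ite, Finset.prod_const, Finset.prod_const_one, mul_one,
        show (4:ℝ) = 2^2 by norm_num, ← pow_mul]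
      exact pow_le_pow_right₀ (by norm_num) hy.2
    · intro y _ _
      apply Finset.prod_nonneg
      intro j _
      split_ifs <;> norm_num
  rw [h1] at h4
  have h5 := h4.trans h3
  have h6 : (7/4 * (A.card:ℝ))^m = ((7/8 : ℝ)^m * (A.card : ℝ)^m) * 2^m := by
    rw [← mul_pow, ← mul_pow]; congr 1; ring
  rw [h6] at h5
  exact le_of_mul_le_mul_right h5 (by positivity)

lemma almost_period {F : Type*} [AddCommGroup F] [Fintype F] [DecidableEq F] (A D : Finset F)
    (m : ℕ) (α : ℝ) (hα0 : 0 < α) (hα : α * Fintype.card F ≤ A.card) :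
    ∃ T : Finset F, α^m * Fintype.card F / 2 ≤ T.card ∧ ∀ t ∈ T, ∀ t' ∈ T,
      ((Finset.univ.filter (fun x => 3 * A.card ≤ 4 * (A.filter (fun y => x + y ∈ D)).card ∧
        4 * (A.filter (fun y => x + t - t' + y ∈ D)).card < A.card)).card : ℝ) ≤
        4 * (7/8 : ℝ)^m * Fintype.card F := by
  classical
  set n : ℝ := (Fintype.card F : ℝ) with hn
  have hn0 : 0 < n := by rw [hn]; exact_mod_cast Fintype.card_pos
  have hA0 : 0 < (A.card : ℝ) := lt_of_lt_of_le (by positivity) hα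
  set P : F → ℕ := fun x => (A.filter (fun y => x + y ∈ D)).card with hP
  set cnt : F → (Fin m → F) → ℕ :=
    fun x y => (Finset.univ.filter (fun j => x + y j ∈ D)).card with hcnt
  set Bad : F → (Fin m → F) → Prop := fun x y =>
    (3 * A.card ≤ 4 * P x ∧ 2 * cnt x y < m) ∨ (4 * P x < A.card ∧ m ≤ 2 * cnt x y) with hBad
  set AM := Fintype.piFinset (fun _ : Fin m => A) with hAM
  have hAMc : (AM.card : ℝ) = (A.card : ℝ)^m := by
    rw [hAM, Fintype.card_piFinset]; simp
  set η : ℝ := (7/8 : ℝ)^m with hη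
  have hη0 : 0 < η := by positivity
  have key1 : ∀ x, ((AM.filter (fun y => Bad x y)).card : ℝ) ≤ η * (A.card : ℝ)^m := by
    intro x
    by_cases h1 : 3 * A.card ≤ 4 * P x
    · have hh : 4 * (A.filter (fun y => ¬ (x + y ∈ D))).card ≤ A.card := by
        have := Finset.card_filter_add_card_filter_not (s := A) (fun y => x + y ∈ D)
        simp only [hP] at h1
        omega
      refine le_trans ?_ (tail_aux A (fun y => ¬ (x + y ∈ D)) m hh)
      norm_cast
      apply Finset.card_le_card
      intro y hy
      rw [Finset.mem_filter] at hy ⊢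
      refine ⟨hy.1, ?_⟩
      have h3 := Finset.card_filter_add_card_filter_not (s := (Finset.univ : Finset (Fin m))) (fun j => x + y j ∈ D)
      rw [Finset.card_univ, Fintype.card_fin] at h3
      have h4 := hy.2
      simp only [hBad, hcnt] at h4
      rcases h4 with h4 | h4
      · omega
      · have := h4.1
        have : 0 < A.card := by exact_mod_cast hA0
        omega
    · by_cases h2 : 4 * P x < A.card
      · refine le_trans ?_ (tail_aux A (fun y => (x + y ∈ D)) m h2.le)
        norm_cast
        apply Finset.card_le_card
        intro y hy
        rw [Finset.mem_filter] at hy ⊢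
        refine ⟨hy.1, ?_⟩
        rcases hy.2 with h4 | h4
        · exact absurd h4.1 h1
        · exact h4.2
      · have : AM.filter (fun y => Bad x y) = ∅ := by
          apply Finset.filter_eq_empty_iff.2
          intro y _ hb
          rcases hb with hb | hb
          · exact h1 hb.1
          · exact h2 hb.1
        rw [this]; simp; positivity
  set bd : (Fin m → F) → ℝ := fun y => ((Finset.univ.filter (fun x => Bad x y)).card : ℝ) with hbd
  have key2 : ∑ y ∈ AM, bd y ≤ n * (η * (A.card : ℝ)^m) := by
    have : ∑ y ∈ AM, bd y = ∑ x : F, ((AM.filter (fun y => Bad x y)).card : ℝ) := by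
      simp only [hbd, Finset.card_filter, Nat.cast_sum]
      rw [Finset.sum_comm]
    rw [this]
    refine (Finset.sum_le_sum (fun x _ => key1 x)).trans ?_
    rw [Finset.sum_const, nsmul_eq_mul, Finset.card_univ]
  set Y := AM.filter (fun y => bd y ≤ 2 * η * n) with hY
  have key3 : (A.card : ℝ)^m / 2 ≤ Y.card := by
    have h1 := Finset.card_filter_add_card_filter_not (s := AM) (fun y => bd y ≤ 2 * η * n)
    have h2 : ((AM.filter (fun y => ¬ bd y ≤ 2 * η * n)).card : ℝ) * (2 * η * n) ≤
        ∑ y ∈ AM, bd y := by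
      rw [← nsmul_eq_mul, ← Finset.sum_const]
      refine (Finset.sum_le_sum (fun y hy => ?_)).trans
        (Finset.sum_le_sum_of_subset_of_nonneg (Finset.filter_subset _ _) ?_)
      · rw [Finset.mem_filter] at hy; exact (not_le.1 hy.2).le
      · intro y _ _; simp only [hbd]; positivity
    have h3 : ((AM.filter (fun y => ¬ bd y ≤ 2 * η * n)).card : ℝ) * (2 * η * n) ≤
        ((A.card : ℝ)^m / 2) * (2 * η * n) := by
      refine (h2.trans key2).trans (le_of_eq ?_); ring
    have h4 := le_of_mul_le_mul_right h3 (by positivity)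
    have h5 : (Y.card : ℝ) + ((AM.filter (fun y => ¬ bd y ≤ 2 * η * n)).card : ℝ) = (A.card : ℝ)^m := by
      rw [← hAMc]; exact_mod_cast h1
    linarith
  -- pigeonhole
  have key4 : ∃ y0 : Fin m → F, n * (Y.card : ℝ) ≤
      n^m * ((Finset.univ.filter (fun t : F => (fun j => y0 j + t) ∈ Y)).card : ℝ) := by
    by_contra hcon
    push Not at hcon
    have h1 : ∑ y0 : Fin m → F, n^m * ((Finset.univ.filter (fun t : F => (fun j => y0 j + t) ∈ Y)).card : ℝ)
        < ∑ y0 : Fin m → F, n * (Y.card : ℝ) := by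
      apply Finset.sum_lt_sum_of_nonempty
      · have : Nonempty F := ⟨0⟩
        exact Finset.univ_nonempty
      · intro y _; exact hcon y
    rw [Finset.sum_const, nsmul_eq_mul, Finset.card_univ, ← Finset.mul_sum] at h1
    have h2 : ∑ y0 : Fin m → F, ((Finset.univ.filter (fun t : F => (fun j => y0 j + t) ∈ Y)).card : ℝ)
        = n * Y.card := by
      simp only [Finset.card_filter, Nat.cast_sum]
      rw [Finset.sum_comm]
      have : ∀ t : F, ∑ y0 : Fin m → F, (((if (fun j => y0 j + t) ∈ Y then 1 else 0 : ℕ)) : ℝ) = Y.card := by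
        intro t
        have := Fintype.sum_equiv (Equiv.addRight (fun _ : Fin m => t))
          (fun y0 : Fin m → F => (((if (fun j => y0 j + t) ∈ Y then 1 else 0 : ℕ)) : ℝ))
          (fun y0 : Fin m → F => (((if y0 ∈ Y then 1 else 0 : ℕ)) : ℝ)) (by
            intro y; rfl)
        rw [this]
        simp
      rw [Finset.sum_congr rfl (fun t _ => this t), Finset.sum_const, nsmul_eq_mul, Finset.card_univ]
    rw [h2] at h1
    simp only [Fintype.card_fun, Fintype.card_fin, Nat.cast_pow] at h1
    rw [← hn] at h1
    exact lt_irrefl _ h1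
  obtain ⟨y0, hy0⟩ := key4
  refine ⟨Finset.univ.filter (fun t : F => (fun j => y0 j + t) ∈ Y), ?_, ?_⟩
  · have h1 : n * ((α * n)^m / 2) ≤ n * (Y.card : ℝ) := by
      gcongr
      refine le_trans ?_ key3
      gcongr
    have h2 := h1.trans hy0
    rw [mul_pow] at h2
    have h3 : n^m * (α^m * n / 2) ≤ n^m * ((Finset.univ.filter (fun t : F => (fun j => y0 j + t) ∈ Y)).card : ℝ) := by
      refine le_trans (le_of_eq ?_) h2; ring
    exact le_of_mul_le_mul_left h3 (by positivity)
  · intro t ht t' ht'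
    rw [Finset.mem_filter] at ht ht'
    have ht := (Finset.mem_filter.1 ht.2).2
    have ht' := (Finset.mem_filter.1 ht'.2).2
    have hsub : (Finset.univ.filter (fun x => 3 * A.card ≤ 4 * P x ∧ 4 * P (x + t - t') < A.card)) ⊆
        (Finset.univ.filter (fun x => Bad x (fun j => y0 j + t))) ∪
        (Finset.univ.filter (fun x => Bad x (fun j => y0 j + t'))).image (fun x => x - t + t') := by
      intro x hx
      rw [Finset.mem_filter] at hx
      have hc : cnt x (fun j => y0 j + t) = cnt (x + t - t') (fun j => y0 j + t') := by
        simp only [hcnt]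
        congr 1
        ext j
        simp only [Finset.mem_filter, Finset.mem_univ, true_and]
        rw [show x + (y0 j + t) = x + t - t' + (y0 j + t') by abel]
      rw [Finset.mem_union]
      by_cases h2 : 2 * cnt x (fun j => y0 j + t) < m
      · left
        rw [Finset.mem_filter]
        exact ⟨Finset.mem_univ _, Or.inl ⟨hx.2.1, h2⟩⟩
      · right
        rw [Finset.mem_image]
        refine ⟨x + t - t', ?_, by abel⟩
        rw [Finset.mem_filter]
        refine ⟨Finset.mem_univ _, Or.inr ⟨hx.2.2, ?_⟩⟩
        rw [← hc]; omega
    have h1 := Finset.card_le_card hsub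
    have h2 := h1.trans (Finset.card_union_le _ _)
    have h3 := h2.trans (Nat.add_le_add_left Finset.card_image_le _)
    have h4 : ((Finset.univ.filter (fun x => 3 * A.card ≤ 4 * P x ∧ 4 * P (x + t - t') < A.card)).card : ℝ) ≤ bd (fun j => y0 j + t) + bd (fun j => y0 j + t') := by
      simp only [hbd]; exact_mod_cast h3
    simp only [hP] at h4
    linarith

noncomputable def cntFive {F : Type*} [Field F] [Fintype F] (γ : F) (f : F → ℝ) : ℝ :=
  ∑ x, ∑ x', ∑ y, ∑ z, f x * f x' * f y * f z * f (x + γ * (x' - x) + y - z)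

set_option maxHeartbeats 1000000 in
lemma dense_count {F : Type*} [Field F] [Fintype F] [DecidableEq F] (γ : F) (hγ : γ ≠ 0)
    (A : Finset F) (m : ℕ) (α : ℝ) (hα0 : 0 < α) (hα : α * Fintype.card F ≤ A.card)
    (hm : (7/8 : ℝ)^m ≤ α^2 / 32) :
    α^(m+5) * (Fintype.card F : ℝ)^4 / 512 ≤ cntFive γ (fun x => if x ∈ A then (1:ℝ) else 0) := by
  classical
  set n : ℝ := (Fintype.card F : ℝ) with hn
  have hn0 : 0 < n := by rw [hn]; exact_mod_cast Fintype.card_pos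
  have hA0 : 0 < (A.card : ℝ) := lt_of_lt_of_le (by positivity) hα
  set f : F → ℝ := fun x => if x ∈ A then (1:ℝ) else 0 with hf
  have hf0 : ∀ x, 0 ≤ f x := by intro x; simp only [hf]; split_ifs <;> norm_num
  have hfs : ∑ x, f x = A.card := by simp [hf]
  set r : F → ℝ := fun s => ∑ z, f z * f (s - z) with hr
  have hr0 : ∀ s, 0 ≤ r s := fun s => Finset.sum_nonneg (fun z _ => mul_nonneg (hf0 _) (hf0 _))
  set D : Finset F := Finset.univ.filter (fun s => (A.card : ℝ)^2 / (8 * n) ≤ r s) with hD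
  obtain ⟨T, hT, hTT⟩ := almost_period A D m α hα0 hα
  rw [← hn] at hT hTT
  set P : F → ℕ := fun x => (A.filter (fun y => x + y ∈ D)).card with hP
  set Ao : Finset F := A.filter (fun x => 3 * A.card ≤ 4 * P x) with hAo
  -- size of Ao
  have hAoc : (A.card : ℝ) / 2 ≤ Ao.card := by
    have h1 : ∑ x ∈ A, ((A.card : ℝ) - P x) ≤ (A.card : ℝ)^2 / 8 := by
      have e1 : ∀ x, ((A.card : ℝ) - P x) = ∑ s, (if s ∈ D then 0 else f (s - x)) := by
        intro x
        have e2 : (A.card : ℝ) - P x = ((A.filter (fun y => ¬ x + y ∈ D)).card : ℝ) := by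
          have := Finset.card_filter_add_card_filter_not (s := A) (fun y => x + y ∈ D)
          rw [← this]; push_cast; simp only [hP]; ring
        rw [e2, Finset.card_filter, Nat.cast_sum]
        rw [← Equiv.sum_comp (Equiv.addLeft x) (fun s => (if s ∈ D then 0 else f (s - x)))]
        rw [← Finset.sum_filter_add_sum_filter_not Finset.univ (fun y => y ∈ A)]
        have e3 : ∑ y ∈ Finset.univ.filter (fun y => ¬ y ∈ A), (if (Equiv.addLeft x) y ∈ D then 0 else f ((Equiv.addLeft x) y - x)) = 0 := by
          apply Finset.sum_eq_zero
          intro y hy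
          simp only [Finset.mem_filter, Finset.mem_univ, true_and] at hy
          simp [hf, hy]
        rw [e3, add_zero]
        simp only [Finset.filter_mem_eq_inter, Finset.univ_inter]
        apply Finset.sum_congr rfl
        intro y hy
        simp [hf, hy]
      simp_rw [e1]
      rw [Finset.sum_comm]
      have e4 : ∀ s, ∑ x ∈ A, (if s ∈ D then 0 else f (s - x)) ≤ (A.card : ℝ)^2 / (8 * n) := by
        intro s
        by_cases hs : s ∈ D
        · simp [hs]; positivity
        · simp only [hs, if_false]
          have : ∑ x ∈ A, f (s - x) = r s := by
            simp only [hr, hf, ite_mul, one_mul, zero_mul]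
            rw [Finset.sum_ite_mem, Finset.univ_inter]
          rw [this]
          simp only [hD, Finset.mem_filter, Finset.mem_univ, true_and, not_le] at hs
          exact hs.le
      refine (Finset.sum_le_sum (fun s _ => e4 s)).trans (le_of_eq ?_)
      rw [Finset.sum_const, nsmul_eq_mul, Finset.card_univ, ← hn]
      field_simp
    have h2 : ((A.filter (fun x => ¬ 3 * A.card ≤ 4 * P x)).card : ℝ) * ((A.card : ℝ) / 4) ≤
        ∑ x ∈ A, ((A.card : ℝ) - P x) := by
      rw [← nsmul_eq_mul, ← Finset.sum_const]
      refine (Finset.sum_le_sum (fun y hy => ?_)).trans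
        (Finset.sum_le_sum_of_subset_of_nonneg (Finset.filter_subset _ _) ?_)
      · rw [Finset.mem_filter] at hy
        have : (4 * P y : ℝ) < 3 * A.card := by exact_mod_cast not_le.1 hy.2
        linarith
      · intro y _ _
        have : (P y : ℝ) ≤ A.card := by
          simp only [hP]; exact_mod_cast Finset.card_filter_le _ _
        linarith
    have h3 := Finset.card_filter_add_card_filter_not (s := A) (fun x => 3 * A.card ≤ 4 * P x)
    have h4 : (Ao.card : ℝ) + ((A.filter (fun x => ¬ 3 * A.card ≤ 4 * P x)).card : ℝ) = A.card := by
      exact_mod_cast h3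
    have h5 : ((A.filter (fun x => ¬ 3 * A.card ≤ 4 * P x)).card : ℝ) * ((A.card : ℝ) / 4) ≤
        ((A.card : ℝ) / 2) * ((A.card : ℝ) / 4) := by
      refine (h2.trans h1).trans (le_of_eq ?_); ring
    have h6 := le_of_mul_le_mul_right h5 (by positivity)
    linarith
  -- rewrite count
  set o : F → ℝ := fun x => if x ∈ Ao then (1:ℝ) else 0 with ho
  have ho0 : ∀ x, 0 ≤ o x := by intro x; simp only [ho]; split_ifs <;> norm_num
  have hos : ∑ x, o x = Ao.card := by simp [ho]
  have hof : ∀ x, o x ≤ f x := by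
    intro x; simp only [ho, hf]
    by_cases hx : x ∈ Ao
    · have : x ∈ A := (Finset.mem_filter.1 hx).1
      simp [hx, this]
    · simp only [hx, if_false]; split_ifs <;> norm_num
  set q : F → ℝ := fun u => if A.card ≤ 4 * P u then (1:ℝ) else 0 with hq
  have hq0 : ∀ x, 0 ≤ q x := by intro x; simp only [hq]; split_ifs <;> norm_num
  set κ : ℝ := ((A.card : ℝ) / 4) * ((A.card : ℝ)^2 / (8 * n)) with hκ
  have hκ0 : 0 ≤ κ := by positivity
  set R : F → ℝ := fun u => ∑ y, ∑ z, f y * f z * f (u + y - z) with hR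
  have hRq : ∀ u, κ * q u ≤ R u := by
    intro u
    have h1 : R u = ∑ y ∈ A, r (u + y) := by
      simp only [hR, hr]
      simp_rw [mul_assoc, ← Finset.mul_sum]
      simp only [hf, ite_mul, one_mul, zero_mul]
      rw [Finset.sum_ite_mem, Finset.univ_inter]
    have h2 : (P u : ℝ) * ((A.card : ℝ)^2 / (8 * n)) ≤ R u := by
      rw [h1]
      simp only [hP]
      rw [← nsmul_eq_mul, ← Finset.sum_const]
      refine (Finset.sum_le_sum (fun y hy => ?_)).trans
        (Finset.sum_le_sum_of_subset_of_nonneg (Finset.filter_subset _ _) (fun y _ _ => hr0 _))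
      have := (Finset.mem_filter.1 hy).2
      simp only [hD, Finset.mem_filter, Finset.mem_univ, true_and] at this
      exact this
    simp only [hq]
    split_ifs with h
    · refine le_trans ?_ h2
      rw [mul_one, hκ]
      have : (A.card : ℝ) ≤ 4 * P u := by exact_mod_cast h
      gcongr
      linarith
    · have : 0 ≤ (P u : ℝ) * ((A.card : ℝ)^2 / (8 * n)) := by positivity
      linarith
  have hC : cntFive γ f = ∑ x, ∑ x', f x * f x' * R (x + γ * (x' - x)) := by
    simp only [cntFive, hR, Finset.mul_sum]
    apply Finset.sum_congr rfl; intro x _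
    apply Finset.sum_congr rfl; intro x' _
    apply Finset.sum_congr rfl; intro y _
    apply Finset.sum_congr rfl; intro z _
    ring
  set S : ℝ := ∑ x, ∑ x', o x * o x' * q (x + γ * (x' - x)) with hS
  have hCS : κ * S ≤ cntFive γ f := by
    rw [hC, hS, Finset.mul_sum]
    apply Finset.sum_le_sum; intro x _
    rw [Finset.mul_sum]
    apply Finset.sum_le_sum; intro x' _
    calc κ * (o x * o x' * q (x + γ * (x' - x))) = o x * o x' * (κ * q (x + γ * (x' - x))) := by ring
      _ ≤ f x * f x' * R (x + γ * (x' - x)) := by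
        apply mul_le_mul _ (hRq _) (mul_nonneg hκ0 (hq0 _)) (mul_nonneg (hf0 _) (hf0 _))
        exact mul_le_mul (hof _) (hof _) (ho0 _) (hf0 _)
  -- lower bound for S
  set Q : ℝ := ∑ t ∈ T, ∑ t' ∈ T, ∑ x, o x * o (x + γ⁻¹ * (t - t')) * q (x + t - t') with hQ
  have hQS : Q ≤ T.card * S := by
    rw [hQ, Finset.sum_comm, ← nsmul_eq_mul, ← Finset.sum_const]
    apply Finset.sum_le_sum; intro t' _
    rw [Finset.sum_comm, hS]
    apply Finset.sum_le_sum; intro x _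
    have h1 : ∑ t ∈ T, o x * o (x + γ⁻¹ * (t - t')) * q (x + t - t') ≤
        ∑ t, o x * o (x + γ⁻¹ * (t - t')) * q (x + t - t') :=
      Finset.sum_le_sum_of_subset_of_nonneg (Finset.subset_univ _)
        (fun t _ _ => mul_nonneg (mul_nonneg (ho0 _) (ho0 _)) (hq0 _))
    refine h1.trans (le_of_eq ?_)
    refine Fintype.sum_bijective (fun t => x + γ⁻¹ * (t - t')) ?_ _ _ ?_
    · refine (Finite.injective_iff_bijective).1 ?_
      intro s t hst
      have h2 := mul_left_cancel₀ (inv_ne_zero hγ) (add_left_cancel hst)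
      exact sub_left_injective h2
    · intro t
      have : x + γ * (x + γ⁻¹ * (t - t') - x) = x + t - t' := by
        field_simp; ring
      rw [this]
  have hQ1 : ∀ t ∈ T, ∀ t' ∈ T, ∑ x, o x * o (x + γ⁻¹ * (t - t')) - 4 * (7/8 : ℝ)^m * n ≤
      ∑ x, o x * o (x + γ⁻¹ * (t - t')) * q (x + t - t') := by
    intro t ht t' ht'
    have h1 := hTT t ht t' ht'
    have h2 : ∑ x, o x * o (x + γ⁻¹ * (t - t')) ≤ ∑ x, o x * o (x + γ⁻¹ * (t - t')) * q (x + t - t') +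
      ∑ x, (if (3 * A.card ≤ 4 * (A.filter (fun y => x + y ∈ D)).card ∧
        4 * (A.filter (fun y => x + t - t' + y ∈ D)).card < A.card) then (1:ℝ) else 0) := by
      rw [← Finset.sum_add_distrib]
      apply Finset.sum_le_sum; intro x _
      by_cases hx : x ∈ Ao
      · have hx3 := (Finset.mem_filter.1 hx).2
        by_cases hx2 : A.card ≤ 4 * P (x + t - t')
        · have : q (x + t - t') = 1 := by simp only [hq, hx2, if_true]
          rw [this, mul_one]
          have : (0:ℝ) ≤ (if (3 * A.card ≤ 4 * (A.filter (fun y => x + y ∈ D)).card ∧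
            4 * (A.filter (fun y => x + t - t' + y ∈ D)).card < A.card) then (1:ℝ) else 0) := by
            split_ifs <;> norm_num
          linarith
        · rw [if_pos ⟨hx3, not_le.1 hx2⟩]
          have h3 : 0 ≤ o x * o (x + γ⁻¹ * (t - t')) * q (x + t - t') :=
            mul_nonneg (mul_nonneg (ho0 _) (ho0 _)) (hq0 _)
          have h4 : ∀ x, o x ≤ 1 := by intro x; simp only [ho]; split_ifs <;> norm_num
          have h5 : o x * o (x + γ⁻¹ * (t - t')) ≤ 1 := mul_le_one₀ (h4 _) (ho0 _) (h4 _)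
          linarith
      · have : o x = 0 := by simp [ho, hx]
        rw [this]; simp only [zero_mul, zero_add]; split_ifs <;> norm_num
    rw [Finset.sum_boole] at h2
    linarith
  have hQ2 : (T.card : ℝ)^2 * (Ao.card : ℝ)^2 / n ≤ ∑ t ∈ T, ∑ t' ∈ T, ∑ x, o x * o (x + γ⁻¹ * (t - t')) := by
    have h1 : ∑ t ∈ T, ∑ t' ∈ T, ∑ x, o x * o (x + γ⁻¹ * (t - t')) =
        ∑ u, (∑ t ∈ T, o (u - γ⁻¹ * t))^2 := by
      have h2 : ∀ t t', ∑ x, o x * o (x + γ⁻¹ * (t - t')) = ∑ u, o (u - γ⁻¹ * t) * o (u - γ⁻¹ * t') := by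
        intro t t'
        rw [← Equiv.sum_comp (Equiv.subRight (γ⁻¹ * t))]
        apply Finset.sum_congr rfl; intro u _
        simp only [Equiv.subRight_apply]
        congr 2; ring
      simp_rw [h2, sq, Finset.sum_mul_sum]
      rw [Finset.sum_comm]
      rw [Finset.sum_comm' (s := T) (t := fun _ => T) (t' := T) (s' := fun _ => T) (by intros; tauto)]
      have : ∀ u, ∑ t ∈ T, ∑ t' ∈ T, o (u - γ⁻¹ * t) * o (u - γ⁻¹ * t') = ∑ t ∈ T, ∑ t' ∈ T, o (u - γ⁻¹ * t) * o (u - γ⁻¹ * t') := fun _ => rfl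
      rw [Finset.sum_comm (s := Finset.univ)]
      apply Finset.sum_congr rfl; intro t _
      rw [Finset.sum_comm (s := Finset.univ)]
    have h3 : ∑ u, ∑ t ∈ T, o (u - γ⁻¹ * t) = T.card * Ao.card := by
      rw [Finset.sum_comm]
      have : ∀ t, ∑ u, o (u - γ⁻¹ * t) = Ao.card := by
        intro t
        rw [← hos]
        exact Equiv.sum_comp (Equiv.subRight (γ⁻¹ * t)) o
      simp_rw [this]
      rw [Finset.sum_const, nsmul_eq_mul]
    have h4 := sq_sum_le_card_mul_sum_sq (s := (Finset.univ : Finset F)) (f := fun u => ∑ t ∈ T, o (u - γ⁻¹ * t))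
    rw [h3, Finset.card_univ, ← hn] at h4
    rw [h1, div_le_iff₀ hn0, ← mul_pow]
    linarith
  have hQ3 : (T.card : ℝ)^2 * (α^2 * n / 8) ≤ Q := by
    have h1 : ∑ t ∈ T, ∑ t' ∈ T, (∑ x, o x * o (x + γ⁻¹ * (t - t')) - 4 * (7/8 : ℝ)^m * n) ≤ Q := by
      rw [hQ]
      exact Finset.sum_le_sum (fun t ht => Finset.sum_le_sum (fun t' ht' => hQ1 t ht t' ht'))
    simp only [Finset.sum_sub_distrib, Finset.sum_const, nsmul_eq_mul] at h1
    have h2 : (T.card : ℝ)^2 * (α^2 * n / 4) ≤ (T.card : ℝ)^2 * (Ao.card : ℝ)^2 / n := by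
      rw [mul_div_assoc ((T.card : ℝ)^2) ((Ao.card : ℝ)^2)]
      refine mul_le_mul_of_nonneg_left ?_ (by positivity)
      rw [le_div_iff₀ hn0]
      have : α * n / 2 ≤ Ao.card := by linarith
      calc α^2 * n / 4 * n = (α * n / 2)^2 := by ring
        _ ≤ _ := by gcongr
    have h3 : (T.card : ℝ) * (T.card * (4 * (7/8 : ℝ)^m * n)) ≤ (T.card : ℝ)^2 * (α^2 * n / 8) := by
      calc (T.card : ℝ) * (T.card * (4 * (7/8 : ℝ)^m * n)) = (T.card : ℝ)^2 * (4 * (7/8 : ℝ)^m * n) := by ring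
        _ ≤ (T.card : ℝ)^2 * (4 * (α^2/32) * n) := by gcongr
        _ = _ := by ring
    have h4 : (T.card : ℝ)^2 * (α^2 * n / 4) = 2 * ((T.card : ℝ)^2 * (α^2 * n / 8)) := by ring
    linarith
  have hTpos : 0 < (T.card : ℝ) := lt_of_lt_of_le (by positivity) hT
  have hS1 : (T.card : ℝ) * (α^2 * n / 8) ≤ S := by
    have : (T.card : ℝ) * ((T.card : ℝ) * (α^2 * n / 8)) ≤ T.card * S := by
      refine le_trans (le_of_eq ?_) (hQ3.trans hQS); ring
    exact le_of_mul_le_mul_left this hTpos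
  have hκ1 : α^3 * n^2 / 32 ≤ κ := by
    rw [hκ]
    calc α^3 * n^2 / 32 = ((α * n)/4) * ((α * n)^2 / (8 * n)) := by field_simp; ring
      _ ≤ _ := by gcongr
  refine le_trans ?_ hCS
  calc α^(m+5) * n^4 / 512 = (α^3 * n^2 / 32) * ((α^m * n / 2) * (α^2 * n / 8)) := by ring
    _ ≤ κ * ((T.card : ℝ) * (α^2 * n / 8)) := by gcongr
    _ ≤ κ * S := by gcongr

lemma bohr_exists {F : Type*} [Field F] [Fintype F] [DecidableEq F] (ψ : AddChar F ℂ)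
    (S : Finset F) (M : ℕ) (hM : 0 < M) :
    ∃ B : Finset F, (Fintype.card F : ℝ) ≤ ((2 * M + 1 : ℝ))^(2 * S.card) * B.card ∧
      ∀ d ∈ B, ∀ ξ ∈ S, ‖ψ (ξ * d) - 1‖ ≤ 2 / M := by
  classical
  have hM' : (0:ℝ) < M := by exact_mod_cast hM
  set φ : F → (S → ℤ × ℤ) := fun x ξ => (⌊(M:ℝ) * (ψ (ξ * x)).re⌋, ⌊(M:ℝ) * (ψ (ξ * x)).im⌋) with hφ
  set t : Finset (S → ℤ × ℤ) :=
    Fintype.piFinset (fun _ => Finset.Icc (-(M:ℤ)) M ×ˢ Finset.Icc (-(M:ℤ)) M) with ht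
  have hfl : ∀ u : ℝ, |u| ≤ 1 → ⌊(M:ℝ) * u⌋ ∈ Finset.Icc (-(M:ℤ)) M := by
    intro u hu
    rw [abs_le] at hu
    rw [Finset.mem_Icc]
    constructor
    · rw [Int.le_floor]; push_cast; nlinarith
    · have : (⌊(M:ℝ) * u⌋ : ℝ) ≤ (M:ℝ) := (Int.floor_le _).trans (by nlinarith)
      exact_mod_cast this
  have hmaps : ∀ x ∈ (Finset.univ : Finset F), φ x ∈ t := by
    intro x _
    rw [ht, Fintype.mem_piFinset]
    intro ξ
    rw [Finset.mem_product]
    have h1 : ‖ψ (ξ * x)‖ = 1 := AddChar.norm_apply _ _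
    refine ⟨hfl _ ?_, hfl _ ?_⟩
    · rw [← h1]; exact Complex.abs_re_le_norm _
    · rw [← h1]; exact Complex.abs_im_le_norm _
  have htc : (t.card : ℝ) = (2 * M + 1 : ℝ)^(2 * S.card) := by
    rw [ht, Fintype.card_piFinset]
    simp only [Finset.card_product, Int.card_Icc, Finset.prod_const, Finset.card_univ,
      Fintype.card_coe]
    have : ((M:ℤ) + 1 - -(M:ℤ)).toNat = 2 * M + 1 := by omega
    rw [this, pow_mul]; push_cast; ring
  have htp : 0 < (t.card : ℝ) := by rw [htc]; positivity
  obtain ⟨y, _, hy⟩ := Finset.exists_le_card_fiber_of_nsmul_le_card_of_maps_to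
    (s := (Finset.univ : Finset F)) (t := t) (f := φ) (b := (Fintype.card F : ℝ) / t.card) hmaps
    (Finset.card_pos.1 (by exact_mod_cast htp))
    (by rw [nsmul_eq_mul, Finset.card_univ]; apply le_of_eq; field_simp)
  set E := Finset.univ.filter (fun x => φ x = y) with hE
  have hEpos : 0 < (E.card : ℝ) := by
    refine lt_of_lt_of_le ?_ hy
    have : 0 < (Fintype.card F : ℝ) := by exact_mod_cast Fintype.card_pos
    positivity
  obtain ⟨x0, hx0⟩ := Finset.card_pos.1 (by exact_mod_cast hEpos : 0 < E.card)
  refine ⟨E.image (fun x => x - x0), ?_, ?_⟩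
  · rw [Finset.card_image_of_injective _ sub_left_injective, ← htc]
    rw [div_le_iff₀ htp] at hy
    linarith
  · intro d hd ξ hξ
    obtain ⟨x, hx, rfl⟩ := Finset.mem_image.1 hd
    have hx1 := (Finset.mem_filter.1 hx).2
    have hx2 := (Finset.mem_filter.1 hx0).2
    have h1 : φ x ⟨ξ, hξ⟩ = φ x0 ⟨ξ, hξ⟩ := by rw [hx1, hx2]
    simp only [hφ, Prod.mk.injEq] at h1
    have h2 := Int.abs_sub_lt_one_of_floor_eq_floor h1.1
    have h3 := Int.abs_sub_lt_one_of_floor_eq_floor h1.2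
    have h4 : ‖ψ (ξ * (x - x0)) - 1‖ = ‖ψ (ξ * x) - ψ (ξ * x0)‖ := by
      have : ψ (ξ * x) - ψ (ξ * x0) = (ψ (ξ * (x - x0)) - 1) * ψ (ξ * x0) := by
        rw [sub_mul, one_mul, ← AddChar.map_add_eq_mul]
        congr 2; ring
      rw [this, norm_mul, AddChar.norm_apply, mul_one]
    rw [h4]
    refine (Complex.norm_le_abs_re_add_abs_im _).trans ?_
    rw [← mul_sub, abs_mul, abs_of_pos hM'] at h2 h3
    rw [Complex.sub_re, Complex.sub_im]
    have h5 : |(ψ (ξ * x)).re - (ψ (ξ * x0)).re| ≤ 1 / M := by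
      rw [le_div_iff₀ hM']; linarith
    have h6 : |(ψ (ξ * x)).im - (ψ (ξ * x0)).im| ≤ 1 / M := by
      rw [le_div_iff₀ hM']; linarith
    calc _ ≤ 1 / (M:ℝ) + 1 / M := add_le_add h5 h6
      _ = 2 / M := by ring

noncomputable def ft {F : Type*} [Field F] [Fintype F] (ψ : AddChar F ℂ) (f : F → ℝ) (ξ : F) : ℂ :=
  ∑ x, (f x : ℂ) * ψ (ξ * x)

lemma ft_cnt {F : Type*} [Field F] [Fintype F] [DecidableEq F] (ψ : AddChar F ℂ)
    (hψ : ψ.IsPrimitive) (γ : F) (f : F → ℝ) :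
    (Fintype.card F : ℂ) * (cntFive γ f : ℂ) =
      ∑ ξ, ft ψ f ((1 - γ) * ξ) * ft ψ f (γ * ξ) * ft ψ f ξ * ft ψ f (-ξ) * ft ψ f (-ξ) := by
  have h1 : ∀ ξ, ft ψ f ((1 - γ) * ξ) * ft ψ f (γ * ξ) * ft ψ f ξ * ft ψ f (-ξ) * ft ψ f (-ξ) =
      ∑ x, ∑ x', ∑ y, ∑ z, ∑ w, ((f x * f x' * f y * f z * f w : ℝ) : ℂ) *
        ψ (ξ * (x + γ * (x' - x) + y - z - w)) := by
    intro ξ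
    have e5 : ft ψ f ((1 - γ) * ξ) * ft ψ f (γ * ξ) * ft ψ f ξ * ft ψ f (-ξ) * ft ψ f (-ξ) =
      ∑ x, ∑ x', ∑ y, ∑ z, ∑ w, (f x * ψ ((1 - γ) * ξ * x)) * (f x' * ψ (γ * ξ * x')) *
        (f y * ψ (ξ * y)) * (f z * ψ (-ξ * z)) * (f w * ψ (-ξ * w)) := by
      simp only [ft, ← Finset.mul_sum, ← Finset.sum_mul]
    rw [e5]
    refine Finset.sum_congr rfl fun x _ => Finset.sum_congr rfl fun x' _ =>
      Finset.sum_congr rfl fun y _ => Finset.sum_congr rfl fun z _ =>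
      Finset.sum_congr rfl fun w _ => ?_
    have : ξ * (x + γ * (x' - x) + y - z - w) = (1 - γ) * ξ * x + γ * ξ * x' + ξ * y + (-ξ) * z + (-ξ) * w := by ring
    rw [this]
    simp only [AddChar.map_add_eq_mul]
    push_cast; ring
  simp_rw [h1]
  refine Eq.trans ?_ Finset.sum_comm
  simp only [cntFive, Complex.ofReal_sum, Finset.mul_sum]
  refine Finset.sum_congr rfl fun x _ => ?_
  refine Eq.trans ?_ Finset.sum_comm
  refine Finset.sum_congr rfl fun x' _ => ?_
  refine Eq.trans ?_ Finset.sum_comm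
  refine Finset.sum_congr rfl fun y _ => ?_
  refine Eq.trans ?_ Finset.sum_comm
  refine Finset.sum_congr rfl fun z _ => ?_
  refine Eq.trans ?_ Finset.sum_comm
  simp_rw [← Finset.mul_sum, AddChar.sum_mulShift _ hψ]
  rw [Finset.sum_eq_single (x + γ * (x' - x) + y - z)]
  · simp; ring
  · intro w _ hw
    rw [if_neg (fun h => hw (sub_eq_zero.1 h).symm)]; simp
  · simp

lemma ft_four {F : Type*} [Field F] [Fintype F] [DecidableEq F] (ψ : AddChar F ℂ)
    (hψ : ψ.IsPrimitive) (f : F → ℝ) :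
    ∑ ξ, ‖ft ψ f ξ‖^4 = (Fintype.card F : ℝ) * ∑ x, ∑ y, ∑ z, f x * f y * f z * f (x + y - z) := by
  have hconj : ∀ ξ, (starRingEnd ℂ) (ft ψ f ξ) = ft ψ f (-ξ) := by
    intro ξ
    simp only [ft, map_sum, map_mul, Complex.conj_ofReal]
    refine Finset.sum_congr rfl fun x _ => ?_
    rw [← AddChar.map_neg_eq_conj, neg_mul]
  have h0 : ∀ ξ, ((‖ft ψ f ξ‖^4 : ℝ) : ℂ) = ft ψ f ξ * ft ψ f ξ * ft ψ f (-ξ) * ft ψ f (-ξ) := by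
    intro ξ
    rw [← hconj]
    have := Complex.mul_conj (ft ψ f ξ)
    have h2 : ft ψ f ξ * ft ψ f ξ * (starRingEnd ℂ) (ft ψ f ξ) * (starRingEnd ℂ) (ft ψ f ξ) =
      (ft ψ f ξ * (starRingEnd ℂ) (ft ψ f ξ)) * (ft ψ f ξ * (starRingEnd ℂ) (ft ψ f ξ)) := by ring
    rw [h2, this, Complex.normSq_eq_norm_sq]; push_cast; ring
  have h1 : ∀ ξ, ft ψ f ξ * ft ψ f ξ * ft ψ f (-ξ) * ft ψ f (-ξ) =
      ∑ x, ∑ y, ∑ z, ∑ w, ((f x * f y * f z * f w : ℝ) : ℂ) *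
        ψ (ξ * (x + y - z - w)) := by
    intro ξ
    have e5 : ft ψ f ξ * ft ψ f ξ * ft ψ f (-ξ) * ft ψ f (-ξ) =
      ∑ x, ∑ y, ∑ z, ∑ w, (f x * ψ (ξ * x)) * 
        (f y * ψ (ξ * y)) * (f z * ψ (-ξ * z)) * (f w * ψ (-ξ * w)) := by
      simp only [ft, ← Finset.mul_sum, ← Finset.sum_mul]
    rw [e5]
    refine Finset.sum_congr rfl fun x _ => 
      Finset.sum_congr rfl fun y _ => Finset.sum_congr rfl fun z _ =>
      Finset.sum_congr rfl fun w _ => ?_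
    have : ξ * (x + y - z - w) = ξ * x + ξ * y + (-ξ) * z + (-ξ) * w := by ring
    rw [this]
    simp only [AddChar.map_add_eq_mul]
    push_cast; ring
  have : ((∑ ξ, ‖ft ψ f ξ‖^4 : ℝ) : ℂ) = (((Fintype.card F : ℝ) * ∑ x, ∑ y, ∑ z, f x * f y * f z * f (x + y - z) : ℝ) : ℂ) := by
    rw [Complex.ofReal_sum]
    simp_rw [h0, h1]
    refine Finset.sum_comm.trans ?_
    rw [Complex.ofReal_mul]
    simp only [Complex.ofReal_sum, Finset.mul_sum]
    refine Finset.sum_congr rfl fun x _ => ?_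
    refine Finset.sum_comm.trans ?_
    refine Finset.sum_congr rfl fun y _ => ?_
    refine Finset.sum_comm.trans ?_
    refine Finset.sum_congr rfl fun z _ => ?_
    refine Finset.sum_comm.trans ?_
    simp_rw [← Finset.mul_sum, AddChar.sum_mulShift _ hψ]
    rw [Finset.sum_eq_single (x + y - z)]
    · simp; ring
    · intro w _ hw
      rw [if_neg (fun h => hw (sub_eq_zero.1 h).symm)]; simp
    · simp
  exact_mod_cast this

lemma prod5_diff (u1 u2 u3 u4 u5 v1 v2 v3 v4 v5 : ℂ) (η : ℝ)
    (h1 : ‖v1‖ ≤ ‖u1‖) (h2 : ‖v2‖ ≤ ‖u2‖) (h3 : ‖v3‖ ≤ ‖u3‖) (h4 : ‖v4‖ ≤ ‖u4‖)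
    (d1 : ‖u1 - v1‖ ≤ η) (d2 : ‖u2 - v2‖ ≤ η) (d3 : ‖u3 - v3‖ ≤ η) (d4 : ‖u4 - v4‖ ≤ η)
    (d5 : ‖u5 - v5‖ ≤ η) :
    ‖u1 * u2 * u3 * u4 * u5 - v1 * v2 * v3 * v4 * v5‖ ≤
      η * (‖u1‖^4 + ‖u2‖^4 + ‖u3‖^4 + ‖u4‖^4 + ‖u5‖^4) := by
  have hη : 0 ≤ η := (norm_nonneg _).trans d1
  have amgm : ∀ p q r s : ℝ, p * q * r * s ≤ (p^4 + q^4 + r^4 + s^4) / 4 := by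
    intro p q r s
    nlinarith [sq_nonneg (p*q - r*s), sq_nonneg (p^2 - q^2), sq_nonneg (r^2 - s^2)]
  have e : u1 * u2 * u3 * u4 * u5 - v1 * v2 * v3 * v4 * v5 =
      (u1 - v1) * (u2 * u3 * u4 * u5) + (u2 - v2) * (v1 * u3 * u4 * u5) +
      (u3 - v3) * (v1 * v2 * u4 * u5) + (u4 - v4) * (v1 * v2 * v3 * u5) +
      (u5 - v5) * (v1 * v2 * v3 * v4) := by ring
  have b1 : ‖(u1 - v1) * (u2 * u3 * u4 * u5)‖ ≤ η * ((‖u2‖^4 + ‖u3‖^4 + ‖u4‖^4 + ‖u5‖^4)/4) := by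
    rw [norm_mul]
    apply mul_le_mul d1 _ (norm_nonneg _) hη
    simp only [norm_mul]; exact amgm _ _ _ _
  have b2 : ‖(u2 - v2) * (v1 * u3 * u4 * u5)‖ ≤ η * ((‖u1‖^4 + ‖u3‖^4 + ‖u4‖^4 + ‖u5‖^4)/4) := by
    rw [norm_mul]
    apply mul_le_mul d2 _ (norm_nonneg _) hη
    simp only [norm_mul]
    refine le_trans ?_ (amgm _ _ _ _)
    gcongr
  have b3 : ‖(u3 - v3) * (v1 * v2 * u4 * u5)‖ ≤ η * ((‖u1‖^4 + ‖u2‖^4 + ‖u4‖^4 + ‖u5‖^4)/4) := by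
    rw [norm_mul]
    apply mul_le_mul d3 _ (norm_nonneg _) hη
    simp only [norm_mul]
    refine le_trans ?_ (amgm _ _ _ _)
    gcongr
  have b4 : ‖(u4 - v4) * (v1 * v2 * v3 * u5)‖ ≤ η * ((‖u1‖^4 + ‖u2‖^4 + ‖u3‖^4 + ‖u5‖^4)/4) := by
    rw [norm_mul]
    apply mul_le_mul d4 _ (norm_nonneg _) hη
    simp only [norm_mul]
    refine le_trans ?_ (amgm _ _ _ _)
    gcongr
  have b5 : ‖(u5 - v5) * (v1 * v2 * v3 * v4)‖ ≤ η * ((‖u1‖^4 + ‖u2‖^4 + ‖u3‖^4 + ‖u4‖^4)/4) := by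
    rw [norm_mul]
    apply mul_le_mul d5 _ (norm_nonneg _) hη
    simp only [norm_mul]
    refine le_trans ?_ (amgm _ _ _ _)
    gcongr
  rw [e]
  refine (norm_add_le _ _).trans ?_
  refine (add_le_add_left (norm_add_le _ _) _).trans ?_
  refine (add_le_add_left (add_le_add_left (norm_add_le _ _) _) _).trans ?_
  refine (add_le_add_left (add_le_add_left (add_le_add_left (norm_add_le _ _) _) _) _).trans ?_
  linarith

lemma sidon_card {F : Type*} [Field F] [Fintype F] [DecidableEq F] (A : Finset F)
    (hS : ∀ x ∈ A, ∀ y ∈ A, ∀ z ∈ A, ∀ w ∈ A, x + y = z + w → (x = z ∧ y = w) ∨ (x = w ∧ y = z)) :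
    (A.card : ℝ)^2 ≤ 2 * Fintype.card F := by
  have h1 : A.offDiag.card ≤ (Finset.univ : Finset F).card := by
    apply Finset.card_le_card_of_injOn (fun p => p.1 - p.2) (fun _ _ => Finset.mem_univ _)
    intro p hp q hq hpq
    simp only [Finset.coe_offDiag, Set.mem_offDiag, Finset.mem_coe] at hp hq
    have h : p.1 + q.2 = q.1 + p.2 := by
      have : p.1 - p.2 = q.1 - q.2 := hpq
      linear_combination this
    rcases hS _ hp.1 _ hq.2.1 _ hq.1 _ hp.2.1 h with h | h
    · exact Prod.ext h.1 h.2.symm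
    · exact absurd h.1 hp.2.2
  have h2 : A.card ≤ Fintype.card F := Finset.card_le_univ A
  rw [Finset.offDiag_card, Finset.card_univ] at h1
  have h3 : A.card * A.card ≤ 2 * Fintype.card F := by omega
  rw [sq]; exact_mod_cast h3

lemma sidon_energy {F : Type*} [Field F] [Fintype F] [DecidableEq F] (A : Finset F)
    (hS : ∀ x ∈ A, ∀ y ∈ A, ∀ z ∈ A, ∀ w ∈ A, x + y = z + w → (x = z ∧ y = w) ∨ (x = w ∧ y = z))
    (f : F → ℝ) (hf : f = fun x => if x ∈ A then (1:ℝ) else 0) :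
    ∑ x, ∑ y, ∑ z, f x * f y * f z * f (x + y - z) ≤ 2 * (A.card : ℝ)^2 := by
  have h1 : ∀ x y, ∑ z, f x * f y * f z * f (x + y - z) ≤ 2 * (f x * f y) := by
    intro x y
    by_cases hx : x ∈ A
    · by_cases hy : y ∈ A
      · have : ∀ z, f x * f y * f z * f (x + y - z) ≤ (if z = x then 1 else 0) + (if z = y then 1 else 0) := by
          intro z
          have hnn : (0:ℝ) ≤ (if z = x then 1 else 0) + (if z = y then 1 else 0) := by
            split_ifs <;> norm_num
          by_cases hz : z ∈ A
          · by_cases hw : x + y - z ∈ A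
            · have e : f x * f y * f z * f (x + y - z) = 1 := by simp [hf, hx, hy, hz, hw]
              rw [e]
              rcases hS x hx y hy z hz _ hw (by ring) with h | h
              · rw [if_pos h.1.symm]; split_ifs <;> norm_num
              · rw [if_pos h.2.symm]; split_ifs <;> norm_num
            · have e : f (x + y - z) = 0 := by simp [hf, hw]
              rw [e, mul_zero]; exact hnn
          · have e : f z = 0 := by simp [hf, hz]
            rw [e, mul_zero, zero_mul]; exact hnn
        refine (Finset.sum_le_sum (fun z _ => this z)).trans ?_
        rw [Finset.sum_add_distrib]
        simp [hf, hx, hy]; norm_num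
      · simp [hf, hy]
    · simp [hf, hx]
  refine (Finset.sum_le_sum fun x _ => Finset.sum_le_sum fun y _ => h1 x y).trans ?_
  simp_rw [← Finset.mul_sum, ← Finset.sum_mul]
  have : ∑ x, f x = A.card := by simp [hf]
  rw [this, sq]

set_option maxHeartbeats 1000000 in
lemma main_field {F : Type*} [Field F] [Fintype F] [DecidableEq F] (ψ : AddChar F ℂ)
    (hψ : ψ.IsPrimitive) (γ : F) (hγ : γ ≠ 0) (hγ1 : 1 - γ ≠ 0) (A : Finset F)
    (hS : ∀ x ∈ A, ∀ y ∈ A, ∀ z ∈ A, ∀ w ∈ A, x + y = z + w → (x = z ∧ y = w) ∨ (x = w ∧ y = z))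
    (hsol : ∀ x ∈ A, ∀ x' ∈ A, ∀ y ∈ A, ∀ z ∈ A, x + γ * (x' - x) + y - z ∈ A → x = x')
    (hA : 0 < A.card) (ε : ℝ) (hε : 0 < ε) (M : ℕ) (hM0 : 0 < M) (hM : 2 / (M:ℝ) ≤ ε)
    (hB : ∀ s : ℕ, (s:ℝ) ≤ 4 / ε^4 → (2 * M + 1 : ℝ)^(2*s) * Real.sqrt (2 * Fintype.card F) ≤ Fintype.card F)
    (m : ℕ) (α : ℝ) (hα : α = (A.card:ℝ)^2 / (8 * Fintype.card F)) (hm : (7/8 : ℝ)^m ≤ α^2 / 32) :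
    ((A.card : ℝ) / (2 * Fintype.card F))^5 * (α^(m+5) * (Fintype.card F : ℝ)^4 / 512) ≤
      4 * Fintype.card F + 40 * ε * Fintype.card F * Real.sqrt (Fintype.card F) := by
  classical
  set n : ℝ := (Fintype.card F : ℝ) with hn
  have hn0 : 0 < n := by rw [hn]; exact_mod_cast Fintype.card_pos
  have hA0 : 0 < (A.card : ℝ) := by exact_mod_cast hA
  have hα0 : 0 < α := by rw [hα]; positivity
  set f : F → ℝ := fun x => if x ∈ A then (1:ℝ) else 0 with hf
  have hf0 : ∀ x, 0 ≤ f x := by intro x; simp only [hf]; split_ifs <;> norm_num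
  have hfs : ∑ x, f x = A.card := by simp [hf]
  have hA2 : (A.card : ℝ)^2 ≤ 2 * n := sidon_card A hS
  have hAs : (A.card : ℝ) ≤ Real.sqrt (2 * n) := Real.le_sqrt_of_sq_le hA2
  have hsq : Real.sqrt (2 * n) ≤ 2 * Real.sqrt n := by
    rw [Real.sqrt_mul (by norm_num)]
    have : Real.sqrt 2 ≤ 2 := by rw [Real.sqrt_le_left (by norm_num)]; norm_num
    gcongr
  have hE := sidon_energy A hS f hf
  have hF4 : ∑ ξ, ‖ft ψ f ξ‖^4 ≤ 4 * n^2 := by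
    rw [ft_four ψ hψ f, ← hn]
    calc n * _ ≤ n * (2 * (A.card:ℝ)^2) := by gcongr
      _ ≤ n * (2 * (2 * n)) := by gcongr
      _ = _ := by ring
  -- spectrum
  set θ : ℝ := ε * Real.sqrt n with hθ
  have hsn : 0 < Real.sqrt n := Real.sqrt_pos.2 hn0
  have hθ0 : 0 < θ := by positivity
  set Sp : Finset F := Finset.univ.filter (fun ξ => θ ≤ ‖ft ψ f ξ‖) with hSp
  have hSpc : (Sp.card : ℝ) ≤ 4 / ε^4 := by
    have h1 : (Sp.card : ℝ) * θ^4 ≤ 4 * n^2 := by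
      refine le_trans ?_ hF4
      rw [← nsmul_eq_mul, ← Finset.sum_const]
      refine (Finset.sum_le_sum (fun y hy => ?_)).trans
        (Finset.sum_le_sum_of_subset_of_nonneg (Finset.filter_subset _ _) (fun y _ _ => by positivity))
      have := (Finset.mem_filter.1 hy).2
      gcongr
    have h2 : θ^4 = ε^4 * n^2 := by
      rw [hθ, mul_pow]; congr 1
      rw [show (4:ℕ) = 2 * 2 by norm_num, pow_mul, Real.sq_sqrt hn0.le]
    rw [h2] at h1
    rw [le_div_iff₀ (by positivity)]
    have h3 : ((Sp.card : ℝ) * ε^4) * n^2 ≤ 4 * n^2 := by linarith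
    exact le_of_mul_le_mul_right h3 (by positivity)
  obtain ⟨B, hBc, hBξ⟩ := bohr_exists ψ Sp M hM0
  have hBA : (A.card : ℝ) ≤ B.card := by
    have h1 := hB _ hSpc
    have h2 : (2 * M + 1 : ℝ)^(2*Sp.card) * Real.sqrt (2 * n) ≤ (2 * M + 1 : ℝ)^(2*Sp.card) * B.card := h1.trans hBc
    exact hAs.trans (le_of_mul_le_mul_left h2 (by positivity))
  have hB0 : 0 < (B.card : ℝ) := hA0.trans_le hBA
  set g : F → ℝ := fun x => (∑ d ∈ B, f (x - d)) / B.card with hg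
  have hg0 : ∀ x, 0 ≤ g x := fun x => div_nonneg (Finset.sum_nonneg fun d _ => hf0 _) hB0.le
  have hgs : ∑ x, g x = A.card := by
    simp only [hg]
    rw [← Finset.sum_div, Finset.sum_comm]
    have : ∀ d, ∑ x, f (x - d) = A.card := fun d => by
      rw [← hfs]; exact Equiv.sum_comp (Equiv.subRight d) f
    simp_rw [this]
    rw [Finset.sum_const, nsmul_eq_mul]; field_simp
  have hg2 : ∑ x, (g x)^2 ≤ 2 := by
    have h1 : ∑ x, (g x)^2 = (∑ d ∈ B, ∑ d' ∈ B, ∑ x, f (x - d) * f (x - d')) / (B.card:ℝ)^2 := by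
      simp only [hg, div_pow]
      rw [← Finset.sum_div]
      congr 1
      simp_rw [sq, Finset.sum_mul_sum]
      rw [Finset.sum_comm]
      apply Finset.sum_congr rfl; intro t _
      rw [Finset.sum_comm]
    have h2 : ∀ d d', ∑ x, f (x - d) * f (x - d') ≤ (if d = d' then (A.card : ℝ) else 0) + 1 := by
      intro d d'
      by_cases hd : d = d'
      · subst hd
        rw [if_pos rfl]
        have : ∀ x, f (x - d) * f (x - d) = f (x - d) := by
          intro x; simp only [hf]; split_ifs <;> norm_num
        simp_rw [this]
        have : ∑ x, f (x - d) = A.card := by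
          rw [← hfs]; exact Equiv.sum_comp (Equiv.subRight d) f
        linarith
      · rw [if_neg hd, zero_add]
        have e1 : ∀ x, f (x - d) * f (x - d') = if (x - d ∈ A ∧ x - d' ∈ A) then (1:ℝ) else 0 := by
          intro x; simp only [hf]
          by_cases h1 : x - d ∈ A <;> by_cases h2 : x - d' ∈ A <;> simp [h1, h2]
        simp_rw [e1]
        rw [Finset.sum_boole]
        have : (Finset.univ.filter (fun x => x - d ∈ A ∧ x - d' ∈ A)).card ≤ 1 := by
          rw [Finset.card_le_one]
          intro x hx y hy
          simp only [Finset.mem_filter, Finset.mem_univ, true_and] at hx hy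
          rcases hS _ hx.1 _ hy.2 _ hy.1 _ hx.2 (by ring) with h | h
          · exact sub_left_injective h.1
          · exact absurd (sub_right_injective h.1) hd
        exact_mod_cast this
    rw [h1, div_le_iff₀ (by positivity)]
    refine (Finset.sum_le_sum fun d _ => Finset.sum_le_sum fun d' _ => h2 d d').trans ?_
    have e2 : ∑ d ∈ B, ∑ d' ∈ B, ((if d = d' then (A.card : ℝ) else 0) + 1) = B.card * A.card + B.card * B.card := by
      simp only [Finset.sum_add_distrib, Finset.sum_const, nsmul_eq_mul, mul_one]
      congr 1
      rw [← nsmul_eq_mul, ← Finset.sum_const]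
      apply Finset.sum_congr rfl; intro d hd
      rw [Finset.sum_ite_eq, if_pos hd]
    rw [e2]
    nlinarith
  -- dense set
  set A' : Finset F := Finset.univ.filter (fun x => (A.card : ℝ) / (2 * n) ≤ g x) with hA'
  have hA'c : α * n ≤ A'.card := by
    have h1 : (A.card : ℝ) / 2 ≤ ∑ x ∈ A', g x := by
      have h2 := Finset.sum_filter_add_sum_filter_not Finset.univ (fun x => (A.card : ℝ) / (2 * n) ≤ g x) g
      have h3 : ∑ x ∈ Finset.univ.filter (fun x => ¬ (A.card : ℝ) / (2 * n) ≤ g x), g x ≤ (A.card : ℝ) / 2 := by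
        calc _ ≤ ∑ x ∈ Finset.univ.filter (fun x => ¬ (A.card : ℝ) / (2 * n) ≤ g x), (A.card : ℝ) / (2 * n) := by
              apply Finset.sum_le_sum; intro x hx
              exact (not_le.1 (Finset.mem_filter.1 hx).2).le
          _ ≤ ∑ x : F, (A.card : ℝ) / (2 * n) :=
              Finset.sum_le_sum_of_subset_of_nonneg (Finset.filter_subset _ _) (fun y _ _ => by positivity)
          _ = _ := by
              rw [Finset.sum_const, nsmul_eq_mul, Finset.card_univ, ← hn]; field_simp
      rw [hgs] at h2
      linarith
    have h4 := sq_sum_le_card_mul_sum_sq (s := A') (f := g)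
    have h5 : ∑ x ∈ A', (g x)^2 ≤ 2 := le_trans
      (Finset.sum_le_sum_of_subset_of_nonneg (Finset.filter_subset _ _) (fun y _ _ => by positivity)) hg2
    have h6 : ((A.card : ℝ) / 2)^2 ≤ (∑ x ∈ A', g x)^2 := by gcongr
    have h7 : (A'.card : ℝ) * ∑ x ∈ A', (g x)^2 ≤ A'.card * 2 := by gcongr
    have h8 : α * n = ((A.card : ℝ) / 2)^2 / 2 := by rw [hα]; field_simp; norm_num
    rw [h8]
    linarith
  have hdense := dense_count γ hγ A' m α hα0 hA'c hm
  rw [← hn] at hdense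
  set β : ℝ := (A.card : ℝ) / (2 * n) with hβ
  have hβ0 : 0 ≤ β := by positivity
  have hlow : β^5 * (α^(m+5) * n^4 / 512) ≤ cntFive γ g := by
    refine (mul_le_mul_of_nonneg_left hdense (by positivity)).trans ?_
    simp only [cntFive, Finset.mul_sum]
    set i : F → ℝ := fun x => if x ∈ A' then (1:ℝ) else 0 with hi
    have hi0 : ∀ x, 0 ≤ β * i x := by
      intro x; apply mul_nonneg hβ0; simp only [hi]; split_ifs <;> norm_num
    have hig : ∀ x, β * i x ≤ g x := by
      intro x
      by_cases hx : x ∈ A'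
      · have := (Finset.mem_filter.1 hx).2
        simp only [hi, hx, if_true, mul_one]; exact this
      · simp only [hi, hx, if_false, mul_zero]; exact hg0 x
    refine Finset.sum_le_sum fun x _ => Finset.sum_le_sum fun x' _ =>
      Finset.sum_le_sum fun y _ => Finset.sum_le_sum fun z _ => ?_
    calc β^5 * (i x * i x' * i y * i z * i (x + γ * (x' - x) + y - z)) =
        (β * i x) * (β * i x') * (β * i y) * (β * i z) * (β * i (x + γ * (x' - x) + y - z)) := by ring
      _ ≤ _ := by
        have p1 := mul_le_mul (hig x) (hig x') (hi0 _) (hg0 _)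
        have p2 := mul_le_mul p1 (hig y) (hi0 _) (mul_nonneg (hg0 _) (hg0 _))
        have p3 := mul_le_mul p2 (hig z) (hi0 _) (mul_nonneg (mul_nonneg (hg0 _) (hg0 _)) (hg0 _))
        exact mul_le_mul p3 (hig _) (hi0 _) (mul_nonneg (mul_nonneg (mul_nonneg (hg0 _) (hg0 _)) (hg0 _)) (hg0 _))
  have hup : cntFive γ f ≤ 4 * n := by
    have h1 : cntFive γ f ≤ ∑ x, ∑ y, ∑ z, f x * f y * f z * f (x + y - z) := by
      simp only [cntFive]
      refine Finset.sum_le_sum fun x _ => ?_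
      rw [Finset.sum_eq_single x]
      · refine Finset.sum_le_sum fun y _ => Finset.sum_le_sum fun z _ => ?_
        have e : x + γ * (x - x) + y - z = x + y - z := by ring
        have e2 : f x * f x = f x := by simp only [hf]; split_ifs <;> norm_num
        rw [e, e2]
      · intro x' _ hx'
        refine Finset.sum_eq_zero fun y _ => Finset.sum_eq_zero fun z _ => ?_
        by_contra hne
        have hmem : ∀ x, f x ≠ 0 → x ∈ A := by
          intro x hx; by_contra hxA; exact hx (by simp [hf, hxA])
        have q1 := mul_ne_zero_iff.1 hne
        have q2 := mul_ne_zero_iff.1 q1.1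
        have q3 := mul_ne_zero_iff.1 q2.1
        have q4 := mul_ne_zero_iff.1 q3.1
        exact hx' (hsol x (hmem _ q4.1) x' (hmem _ q4.2) y (hmem _ q3.2) z (hmem _ q2.2) (hmem _ q1.2)).symm
      · simp
    linarith
  -- Fourier comparison
  set μ : F → ℂ := fun ξ => (∑ d ∈ B, ψ (ξ * d)) / B.card with hμ
  have hBC : (B.card : ℂ) ≠ 0 := by exact_mod_cast hB0.ne'
  have hgμ : ∀ ξ, ft ψ g ξ = ft ψ f ξ * μ ξ := by
    intro ξ
    simp only [ft, hg, hμ]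
    rw [← mul_div_assoc, eq_div_iff hBC, Finset.sum_mul_sum, Finset.sum_mul, Finset.sum_comm (s := Finset.univ) (t := B)]
    have e1 : ∀ x, ((((∑ d ∈ B, f (x - d)) / B.card : ℝ)) : ℂ) * ψ (ξ * x) * B.card = ∑ d ∈ B, (f (x - d) : ℂ) * ψ (ξ * x) := by
      intro x; push_cast; rw [← Finset.sum_mul]; field_simp
    simp_rw [e1]
    rw [Finset.sum_comm]
    refine Finset.sum_congr rfl fun d _ => ?_
    rw [← Equiv.sum_comp (Equiv.addRight d)]
    refine Finset.sum_congr rfl fun x _ => ?_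
    simp only [Equiv.coe_addRight, add_sub_cancel_right]
    rw [mul_add, AddChar.map_add_eq_mul, mul_assoc]
  have hμ1 : ∀ ξ, ‖μ ξ‖ ≤ 1 := by
    intro ξ
    simp only [hμ]
    rw [norm_div, Complex.norm_natCast, div_le_one hB0]
    refine (norm_sum_le _ _).trans ?_
    simp [AddChar.norm_apply]
  have hμS : ∀ ξ ∈ Sp, ‖1 - μ ξ‖ ≤ ε := by
    intro ξ hξ
    have e : 1 - μ ξ = (∑ d ∈ B, (1 - ψ (ξ * d))) / B.card := by
      simp only [hμ]
      rw [Finset.sum_sub_distrib, sub_div]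
      congr 1
      simp; rw [div_self hBC]
    rw [e, norm_div, Complex.norm_natCast, div_le_iff₀ hB0]
    refine (norm_sum_le _ _).trans ?_
    calc ∑ d ∈ B, ‖1 - ψ (ξ * d)‖ ≤ ∑ d ∈ B, ε := by
          apply Finset.sum_le_sum; intro d hd
          rw [norm_sub_rev]; exact (hBξ d hd ξ hξ).trans hM
      _ = _ := by rw [Finset.sum_const, nsmul_eq_mul]; ring
  have hle : ∀ ξ, ‖ft ψ g ξ‖ ≤ ‖ft ψ f ξ‖ := by
    intro ξ; rw [hgμ, norm_mul]
    exact mul_le_of_le_one_right (norm_nonneg _) (hμ1 ξ)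
  have hdiff : ∀ ξ, ‖ft ψ f ξ - ft ψ g ξ‖ ≤ 2 * θ := by
    intro ξ
    have e : ft ψ f ξ - ft ψ g ξ = ft ψ f ξ * (1 - μ ξ) := by rw [hgμ]; ring
    rw [e, norm_mul]
    by_cases hξ : ξ ∈ Sp
    · have h1 : ‖ft ψ f ξ‖ ≤ A.card := by
        rw [← hfs]
        refine (norm_sum_le _ _).trans (Finset.sum_le_sum fun x _ => ?_)
        rw [norm_mul, AddChar.norm_apply, mul_one, Complex.norm_real, Real.norm_of_nonneg (hf0 x)]
      calc _ ≤ (2 * Real.sqrt n) * ε :=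
            mul_le_mul (h1.trans (hAs.trans hsq)) (hμS ξ hξ) (norm_nonneg _) (by positivity)
        _ = _ := by rw [hθ]; ring
    · have h1 : ‖ft ψ f ξ‖ ≤ θ := by
        simp only [hSp, Finset.mem_filter, Finset.mem_univ, true_and, not_le] at hξ
        exact hξ.le
      have h2 : ‖1 - μ ξ‖ ≤ 2 := by
        refine (norm_sub_le _ _).trans ?_
        rw [norm_one]; linarith [hμ1 ξ]
      calc _ ≤ θ * 2 := mul_le_mul h1 h2 (norm_nonneg _) hθ0.le
        _ = _ := by ring
  have hfin : n * |cntFive γ f - cntFive γ g| ≤ (2 * θ) * (5 * (4 * n^2)) := by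
    have h1 := ft_cnt ψ hψ γ f
    have h2 := ft_cnt ψ hψ γ g
    have h3 : n * |cntFive γ f - cntFive γ g| = ‖(Fintype.card F : ℂ) * (cntFive γ f : ℂ) - (Fintype.card F : ℂ) * (cntFive γ g : ℂ)‖ := by
      rw [← mul_sub, norm_mul, Complex.norm_natCast, ← Complex.ofReal_sub, Complex.norm_real, Real.norm_eq_abs]
    rw [h3, h1, h2, ← Finset.sum_sub_distrib]
    refine (norm_sum_le _ _).trans ?_
    refine (Finset.sum_le_sum fun ξ _ => prod5_diff _ _ _ _ _ _ _ _ _ _ (2 * θ) (hle _) (hle _) (hle _) (hle _)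
      (hdiff _) (hdiff _) (hdiff _) (hdiff _) (hdiff _)).trans ?_
    rw [← Finset.mul_sum]
    refine mul_le_mul_of_nonneg_left ?_ (by positivity)
    simp only [Finset.sum_add_distrib]
    have s1 : ∑ ξ, ‖ft ψ f ((1 - γ) * ξ)‖^4 = ∑ ξ, ‖ft ψ f ξ‖^4 :=
      Equiv.sum_comp (Equiv.mulLeft₀ _ hγ1) (fun ξ => ‖ft ψ f ξ‖^4)
    have s2 : ∑ ξ, ‖ft ψ f (γ * ξ)‖^4 = ∑ ξ, ‖ft ψ f ξ‖^4 :=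
      Equiv.sum_comp (Equiv.mulLeft₀ _ hγ) (fun ξ => ‖ft ψ f ξ‖^4)
    have s3 : ∑ ξ, ‖ft ψ f (-ξ)‖^4 = ∑ ξ, ‖ft ψ f ξ‖^4 :=
      Equiv.sum_comp (Equiv.neg F) (fun ξ => ‖ft ψ f ξ‖^4)
    rw [s1, s2, s3]
    linarith
  have hfin2 : |cntFive γ f - cntFive γ g| ≤ 40 * ε * n * Real.sqrt n := by
    have : n * |cntFive γ f - cntFive γ g| ≤ n * (40 * ε * n * Real.sqrt n) := by
      refine hfin.trans (le_of_eq ?_); rw [hθ]; ring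
    exact le_of_mul_le_mul_left this hn0
  have := (abs_le.1 hfin2).1
  linarith

lemma split_sum (k : ℕ) (a : Fin (k+1) → ℕ) (s x x' y z w : ℤ) (φ : ℤ → ℤ) :
    (∑ i : Fin (k + 1 + 3), (if h : i.val < k + 1 then (a ⟨i.val, h⟩ : ℤ)
            else if i.val = k + 1 then s else -s) *
      φ (if i.val = 0 then x else if i.val < k + 1 then x' else if i.val = k + 1 then y
        else if i.val = k + 2 then z else w)) =
    (a 0 : ℤ) * φ x + (∑ j : Fin k, (a j.succ : ℤ)) * φ x' + s * φ y - s * φ z - s * φ w := by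
  rw [Fin.sum_univ_castSucc, Fin.sum_univ_castSucc, Fin.sum_univ_castSucc, Fin.sum_univ_succ]
  have h : ∀ i : Fin k, i.val < k := fun i => i.isLt
  simp [Finset.sum_mul]
  have e : (∑ j : Fin k, (a ⟨j.val + 1, by omega⟩ : ℤ) * φ x') = ∑ j : Fin k, (a j.succ : ℤ) * φ x' := rfl
  rw [e]
  ring

lemma int_sol (k : ℕ) (hk : 1 ≤ k) (a : Fin (k+1) → ℕ) (ha : ∀ i, 0 < a i) (A : Finset ℤ)
    (H : ∀ v : Fin (k + 1 + 3) → ℤ, (∀ i, v i ∈ A) →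
        (∑ i, (if h : i.val < k + 1 then (a ⟨i.val, h⟩ : ℤ)
            else if i.val = k + 1 then (∑ j, (a j : ℤ)) else -(∑ j, (a j : ℤ))) * v i) = 0 →
        ∀ α : ℤ, (∑ i ∈ Finset.univ.filter (fun i => v i = α),
          (if h : i.val < k + 1 then (a ⟨i.val, h⟩ : ℤ)
            else if i.val = k + 1 then (∑ j, (a j : ℤ)) else -(∑ j, (a j : ℤ)))) = 0) :
    ∃ b c : ℕ, 0 < b ∧ 0 < c ∧ b + c = ∑ j, a j ∧
      (∀ x ∈ A, ∀ x' ∈ A, ∀ y ∈ A, ∀ z ∈ A, ∀ w ∈ A,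
        (b:ℤ) * x + c * x' + (b + c) * y = (b + c) * z + (b + c) * w → x = x') ∧
      (∀ x ∈ A, ∀ y ∈ A, ∀ z ∈ A, ∀ w ∈ A, x + y = z + w → (x = z ∧ y = w) ∨ (x = w ∧ y = z)) := by
  have hc : 0 < ∑ j : Fin k, a j.succ := by
    apply Finset.sum_pos (fun i _ => ha _)
    exact ⟨⟨0, hk⟩, Finset.mem_univ _⟩
  refine ⟨a 0, ∑ j : Fin k, a j.succ, ha 0, hc, (Fin.sum_univ_succ _).symm, ?_⟩
  have hs : (∑ j, (a j : ℤ)) = (a 0 : ℤ) + ∑ j : Fin k, (a j.succ : ℤ) := Fin.sum_univ_succ _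
  have key : ∀ x ∈ A, ∀ x' ∈ A, ∀ y ∈ A, ∀ z ∈ A, ∀ w ∈ A,
      (a 0 : ℤ) * x + (∑ j : Fin k, (a j.succ : ℤ)) * x' + (∑ j, (a j : ℤ)) * y
        - (∑ j, (a j : ℤ)) * z - (∑ j, (a j : ℤ)) * w = 0 → ∀ α : ℤ,
      (a 0 : ℤ) * (if x = α then 1 else 0) + (∑ j : Fin k, (a j.succ : ℤ)) * (if x' = α then 1 else 0)
        + (∑ j, (a j : ℤ)) * (if y = α then 1 else 0)
        - (∑ j, (a j : ℤ)) * (if z = α then 1 else 0) - (∑ j, (a j : ℤ)) * (if w = α then 1 else 0) = 0 := by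
    intro x hx x' hx' y hy z hz w hw he α
    have h1 := H (fun i => if i.val = 0 then x else if i.val < k + 1 then x' else
        if i.val = k + 1 then y else if i.val = k + 2 then z else w)
      (by intro i; split_ifs <;> assumption)
      (by rw [← he]; exact split_sum k a _ x x' y z w (fun t => t)) α
    rw [Finset.sum_filter] at h1
    rw [← split_sum k a _ x x' y z w (fun t => if t = α then 1 else 0)]
    refine Eq.trans ?_ h1
    apply Finset.sum_congr rfl
    intro i _
    rw [mul_ite, mul_one, mul_zero]
  have hb0 : 0 < (a 0 : ℤ) := by exact_mod_cast ha 0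
  have hc0 : 0 < ∑ j : Fin k, (a j.succ : ℤ) := by exact_mod_cast hc
  push_cast
  rw [hs] at key
  generalize (∑ j : Fin k, (a j.succ : ℤ)) = c at *
  generalize (a 0 : ℤ) = b at *
  constructor
  · intro x hx x' hx' y hy z hz w hw he
    by_contra hne
    have h1 := key x hx x' hx' y hy z hz w hw (by linarith) x
    rw [if_pos rfl, if_neg (Ne.symm hne)] at h1
    split_ifs at h1 <;> linarith
  · intro x hx y hy z hz w hw he
    have h1 := key x hx x hx y hy z hz w hw (by linear_combination (b + c) * he) x
    rw [if_pos rfl] at h1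
    by_cases hz' : z = x
    · left; constructor; exact hz'.symm; linarith
    · by_cases hw' : w = x
      · right; constructor; exact hw'.symm; linarith
      · rw [if_neg hz', if_neg hw'] at h1
        split_ifs at h1 <;> linarith

lemma transfer (b c : ℕ) (hb : 0 < b) (hc : 0 < c) (N : ℕ) (A : Finset ℤ)
    (hAN : A ⊆ Finset.Icc 1 (N : ℤ)) 
    (h1 : ∀ x ∈ A, ∀ x' ∈ A, ∀ y ∈ A, ∀ z ∈ A, ∀ w ∈ A,
        (b:ℤ) * x + c * x' + (b + c) * y = (b + c) * z + (b + c) * w → x = x')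
    (h2 : ∀ x ∈ A, ∀ y ∈ A, ∀ z ∈ A, ∀ w ∈ A, x + y = z + w → (x = z ∧ y = w) ∨ (x = w ∧ y = z))
    (p : ℕ) [Fact p.Prime] (hp : 4 * (b + c) * N < p) (hN : 3 ≤ N) :
    ∃ (A' : Finset (ZMod p)) (γ : ZMod p), γ ≠ 0 ∧ 1 - γ ≠ 0 ∧ A'.card = A.card ∧
    (∀ x ∈ A', ∀ y ∈ A', ∀ z ∈ A', ∀ w ∈ A', x + y = z + w → (x = z ∧ y = w) ∨ (x = w ∧ y = z)) ∧
    (∀ x ∈ A', ∀ x' ∈ A', ∀ y ∈ A', ∀ z ∈ A', x + γ * (x' - x) + y - z ∈ A' → x = x') := by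
  have hpz : 4 * ((b:ℤ) + c) * N < p := by exact_mod_cast hp
  have hb' : (1:ℤ) ≤ b := by exact_mod_cast hb
  have hc' : (1:ℤ) ≤ c := by exact_mod_cast hc
  have hN' : (3:ℤ) ≤ N := by exact_mod_cast hN
  have lift : ∀ t : ℤ, -(p:ℤ) < t → t < p → (t : ZMod p) = 0 → t = 0 := by
    intro t h1 h2 h3
    rw [ZMod.intCast_zmod_eq_zero_iff_dvd] at h3
    exact Int.eq_zero_of_abs_lt_dvd h3 (abs_lt.mpr ⟨h1, h2⟩)
  have hbN : (b:ℤ) * 3 ≤ b * N := by nlinarith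
  have hcN : (c:ℤ) * 3 ≤ c * N := by nlinarith
  have hb0 : (b : ZMod p) ≠ 0 := by
    intro h
    have := lift b (by nlinarith) (by nlinarith) (by exact_mod_cast h)
    omega
  have hc0 : (c : ZMod p) ≠ 0 := by
    intro h
    have := lift c (by nlinarith) (by nlinarith) (by exact_mod_cast h)
    omega
  have ha0 : (b + c : ZMod p) ≠ 0 := by
    intro h
    have := lift (b + c) (by nlinarith) (by nlinarith) (by exact_mod_cast h)
    omega
  have hI : ∀ x ∈ A, 1 ≤ x ∧ x ≤ N := fun x hx => Finset.mem_Icc.mp (hAN hx)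
  have hNp : 4 * (N:ℤ) ≤ p := by nlinarith
  refine ⟨A.image (fun t : ℤ => (t : ZMod p)), (c : ZMod p) / (b + c), div_ne_zero hc0 ha0, ?_, ?_, ?_, ?_⟩
  · have : (1 : ZMod p) - c / (b + c) = b / (b + c) := by field_simp; ring
    rw [this]; exact div_ne_zero hb0 ha0
  · apply Finset.card_image_of_injOn
    intro x hx y hy hxy
    have := hI x hx
    have := hI y hy
    have := lift (x - y) (by omega) (by omega) (by push_cast; exact sub_eq_zero.mpr hxy)
    omega
  · simp only [Finset.forall_mem_image]
    intro x hx y hy z hz w hw he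
    have := hI x hx
    have := hI y hy
    have := hI z hz
    have := hI w hw
    have := lift (x + y - z - w) (by omega) (by omega) (by push_cast; linear_combination he)
    rcases h2 x hx y hy z hz w hw (by omega) with ⟨h, h'⟩ | ⟨h, h'⟩
    · left; rw [h, h']; exact ⟨rfl, rfl⟩
    · right; rw [h, h']; exact ⟨rfl, rfl⟩
  · simp only [Finset.forall_mem_image]
    intro x hx x' hx' y hy z hz he
    obtain ⟨w, hw, he⟩ := Finset.mem_image.mp he
    have q := hI x hx
    have q' := hI x' hx'
    have qy := hI y hy
    have qz := hI z hz
    have qw := hI w hw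
    have e0 : ((b * x + c * x' + (b + c) * y - (b + c) * z - (b + c) * w : ℤ) : ZMod p) = 0 := by
      push_cast
      rw [he]
      field_simp
      ring
    have := lift _ (by nlinarith) (by nlinarith) e0
    rw [h1 x hx x' hx' y hy z hz w hw (by linarith)]

set_option maxHeartbeats 2000000 in
lemma analytic (n : ℕ) (K : ℝ) (hK : 0 < K) (hK2 : K^2 ≤ 2 * n)
    (H : ∀ (ε : ℝ) (hε : 0 < ε) (M : ℕ) (hM0 : 0 < M) (hM : 2 / (M:ℝ) ≤ ε)
    (hB : ∀ s : ℕ, (s:ℝ) ≤ 4 / ε^4 → (2 * M + 1 : ℝ)^(2*s) * Real.sqrt (2 * n) ≤ n)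
    (m : ℕ) (α : ℝ) (hα : α = K^2 / (8 * n)) (hm : (7/8 : ℝ)^m ≤ α^2 / 32),
    (K / (2 * n))^5 * (α^(m+5) * (n : ℝ)^4 / 512) ≤ 4 * n + 40 * ε * n * Real.sqrt n)
    (hn : 252 ≤ Real.log (Real.log n)) :
    ∃ u : ℝ, 0 ≤ u ∧ K^2 = 8 * n * Real.exp (-u) ∧ Real.log (Real.log n) ≤ 684 * u^2 := by
  set L := Real.log n with hL
  have hn0 : (0:ℝ) < n := by nlinarith [sq_pos_of_pos hK]
  have hnL : (n:ℝ) = Real.exp L := (Real.exp_log hn0).symm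
  have hLpos : 0 < L := by
    have : 0 ≤ L := Real.log_natCast_nonneg n
    rcases this.lt_or_eq with h | h
    · exact h
    · rw [← h, Real.log_zero] at hn; norm_num at hn
  have hL65 : (65:ℝ)^6 ≤ L := by
    rw [← Real.log_le_log_iff (by positivity) hLpos, Real.log_pow]
    have := Real.log_le_sub_one_of_pos (show (0:ℝ) < 65/33 by norm_num)
    have h2 := Real.log_le_sub_one_of_pos (show (0:ℝ) < 33 by norm_num)
    have h3 : Real.log 65 = Real.log (65/33) + Real.log 33 := by
      rw [← Real.log_mul (by norm_num) (by norm_num)]; norm_num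
    push_cast
    linarith
  set α := K^2 / (8 * n) with hα
  have hα0 : 0 < α := by positivity
  have hα4 : α ≤ 1/4 := by
    rw [hα, div_le_iff₀ (by positivity)]; linarith
  set u := -Real.log α with hu
  have hαu : α = Real.exp (-u) := by rw [hu, neg_neg, Real.exp_log hα0]
  have hu1 : 1 ≤ u := by
    have : Real.exp (-u) ≤ Real.exp (-1) := by
      rw [← hαu]; refine hα4.trans ?_
      rw [Real.exp_neg, ← one_div]
      apply one_div_le_one_div_of_le (Real.exp_pos _)
      linarith [Real.exp_one_lt_d9]
    have := Real.exp_le_exp.mp this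
    linarith
  have hKα : K^2 = 8 * n * α := by rw [hα]; field_simp
  refine ⟨u, by linarith, by rw [hKα, hαu], ?_⟩
  -- the choice of E
  set y := L ^ ((1:ℝ)/6) with hy
  have hy6 : y^6 = L := by
    rw [hy, ← Real.rpow_natCast, ← Real.rpow_mul hLpos.le]; norm_num
  have hy0 : 0 ≤ y := by positivity
  have hy65 : 65 ≤ y := by
    rw [← hy6] at hL65
    exact le_of_pow_le_pow_left₀ (by norm_num) hy0 hL65
  set E := ⌊y⌋₊ with hE
  have hE65 : (65:ℝ) ≤ E := by
    have : 65 ≤ E := Nat.le_floor (by exact_mod_cast hy65)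
    exact_mod_cast this
  have hEy : (E:ℝ) ≤ y := Nat.floor_le hy0
  have hyE : y ≤ 2 * E := by
    have := Nat.lt_floor_add_one y
    rw [← hE] at this; linarith
  have hE6 : (E:ℝ)^6 ≤ L := by rw [← hy6]; gcongr
  have hE0 : (0:ℝ) < E := by linarith
  have hE5 : 64 * (E:ℝ)^5 + 1 ≤ L := by
    have : (1:ℝ) ≤ (E:ℝ)^5 := one_le_pow₀ (by linarith)
    nlinarith
  set m := ⌈16 * u + 32⌉₊ with hm
  have hm1 : 16 * u + 32 ≤ m := Nat.le_ceil _
  have hm2 : (m:ℝ) < 16 * u + 32 + 1 := Nat.ceil_lt_add_one (by linarith)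
  have main := H (1 / E) (by positivity) (2 * E) (by
      have : 0 < E := by exact_mod_cast hE0
      omega) (by push_cast; apply le_of_eq; field_simp) (by
      intro s hs
      have hs' : (s:ℝ) ≤ 4 * (E:ℝ)^4 := by
        refine hs.trans (le_of_eq ?_); field_simp
      have e1 : (2 * ((2 * E : ℕ) : ℝ) + 1) ^ (2 * s) ≤ Real.exp (32 * (E:ℝ)^5) := by
        have : (2 * ((2 * E : ℕ) : ℝ) + 1) ≤ Real.exp (4 * E) := by
          push_cast
          linarith [Real.add_one_le_exp (4 * (E:ℝ))]
        calc (2 * ((2 * E : ℕ) : ℝ) + 1) ^ (2 * s) ≤ Real.exp (4 * E) ^ (2 * s) := by gcongr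
          _ = Real.exp ((2 * s : ℕ) * (4 * E)) := by rw [← Real.exp_nat_mul]
          _ ≤ _ := by
            apply Real.exp_le_exp.mpr
            push_cast
            nlinarith
      have e2 : Real.sqrt (2 * n) ≤ Real.exp ((1 + L) / 2) := by
        apply Real.sqrt_le_iff.mpr ⟨(Real.exp_pos _).le, ?_⟩
        rw [← Real.exp_nat_mul]
        have : ((2:ℕ):ℝ) * ((1 + L)/2) = 1 + L := by push_cast; ring
        rw [this, Real.exp_add, ← hnL]
        have := Real.add_one_le_exp (1:ℝ)
        nlinarith
      calc _ ≤ Real.exp (32 * (E:ℝ)^5) * Real.exp ((1 + L) / 2) := by gcongr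
        _ = Real.exp (32 * (E:ℝ)^5 + (1 + L) / 2) := by rw [Real.exp_add]
        _ ≤ Real.exp L := Real.exp_le_exp.mpr (by linarith)
        _ = n := hnL.symm) m α rfl (by
      have h78 : (7/8:ℝ) ≤ Real.exp (-(1/8)) := by linarith [Real.add_one_le_exp (-(1/8:ℝ))]
      have e4 : (32:ℝ) ≤ Real.exp 4 := by
        have : Real.exp 4 = Real.exp 1 ^ 4 := by rw [← Real.exp_nat_mul]; norm_num
        rw [this]
        calc (32:ℝ) ≤ 2.7 ^ 4 := by norm_num
          _ ≤ _ := by gcongr; linarith [Real.exp_one_gt_d9]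
      calc (7/8:ℝ)^m ≤ Real.exp (-(1/8))^m := by gcongr
        _ = Real.exp (m * (-(1/8))) := by rw [← Real.exp_nat_mul]
        _ ≤ Real.exp ((-u) + (-u) + (-4)) := Real.exp_le_exp.mpr (by linarith)
        _ = α^2 * (Real.exp 4)⁻¹ := by rw [Real.exp_add, Real.exp_add, ← hαu, Real.exp_neg]; ring
        _ ≤ α^2 / 32 := by
          rw [div_eq_mul_inv]; gcongr)
  set r := Real.sqrt n with hr
  have hr0 : 0 < r := Real.sqrt_pos.mpr hn0
  have hrn : (n:ℝ) = r^2 := (Real.sq_sqrt hn0.le).symm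
  have hEr : E ≤ r := by
    apply Real.le_sqrt_of_sq_le
    rw [hnL]
    have : (E:ℝ)^2 ≤ E^6 := pow_le_pow_right₀ (by linarith) (by norm_num)
    linarith [Real.add_one_le_exp L]
  set δ := K / r with hδ
  have hδ0 : 0 < δ := by positivity
  have hKδ : K = δ * r := by rw [hδ]; field_simp
  have hδ2 : δ^2 = 8 * α := by
    rw [hδ, div_pow, hKα, hrn]; field_simp
  have hδα : α ≤ δ := by
    apply le_of_sq_le_sq _ hδ0.le
    rw [hδ2]; nlinarith
  have hδ5 : α^3 ≤ δ^5 := by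
    have : δ^5 = (δ^2)^2 * δ := by ring
    rw [this, hδ2]
    have : 0 < α^2 := by positivity
    nlinarith
  have hαm : α^(m+8) ≤ 2^20 / E := by
    rw [hrn, hKδ] at main
    have e1 : (δ * r / (2 * r^2))^5 * (α^(m+5) * (r^2)^4 / 512) = δ^5 * α^(m+5) / 2^14 * r^3 := by
      field_simp
      norm_num
    have e2 : 4 * r^2 + 40 * (1/E) * r^2 * r ≤ 44 / E * r^3 := by
      have : 4 * r^2 ≤ 4 / E * r^3 := by
        rw [div_mul_eq_mul_div, le_div_iff₀ hE0]
        have : r^2 * E ≤ r^2 * r := by gcongr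
        nlinarith
      have e3 : 44 / E * r^3 = 4 / E * r^3 + 40 * (1/E) * r^2 * r := by ring
      linarith
    rw [e1] at main
    have h3 := le_of_mul_le_mul_right (main.trans e2) (by positivity : 0 < r^3)
    have h4 : α^(m+8) ≤ δ^5 * α^(m+5) := by
      have : α^(m+8) = α^3 * α^(m+5) := by ring
      rw [this]; gcongr
    have h5 : (44:ℝ) / E * 2^14 ≤ 2^20 / E := by
      rw [div_mul_eq_mul_div]; gcongr; norm_num
    have h6 : δ^5 * α^(m+5) ≤ 44 / E * 2^14 := by
      rwa [div_le_iff₀ (by positivity)] at h3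
    linarith
  have hlog := Real.log_le_log (by positivity) hαm
  rw [Real.log_pow, Real.log_div (by positivity) hE0.ne', Real.log_pow] at hlog
  have hlα : Real.log α = -u := by rw [hu]; ring
  have hl2 : Real.log 2 ≤ 1 := by
    linarith [Real.log_le_sub_one_of_pos (show (0:ℝ) < 2 by norm_num)]
  have hLE : Real.log L ≤ 6 * (Real.log 2 + Real.log E) := by
    rw [← hy6, Real.log_pow, ← Real.log_mul (by norm_num) hE0.ne']
    push_cast
    have := Real.log_le_log (by linarith) hyE
    linarith
  rw [hlα] at hlog
  push_cast at hlog
  have : (m + 8 : ℝ) * u ≤ 57 * u * u := by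
    gcongr; linarith
  nlinarith

lemma count_bound (b c : ℕ) (hb : 0 < b) (hc : 0 < c) (N : ℕ) (A : Finset ℤ)
    (hAN : A ⊆ Finset.Icc 1 (N : ℤ)) 
    (h1 : ∀ x ∈ A, ∀ x' ∈ A, ∀ y ∈ A, ∀ z ∈ A, ∀ w ∈ A,
        (b:ℤ) * x + c * x' + (b + c) * y = (b + c) * z + (b + c) * w → x = x')
    (h2 : ∀ x ∈ A, ∀ y ∈ A, ∀ z ∈ A, ∀ w ∈ A, x + y = z + w → (x = z ∧ y = w) ∨ (x = w ∧ y = z))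
    (hN : 3 ≤ N) (hA : 0 < A.card) :
    ∃ n : ℕ, N ≤ n ∧ n ≤ 8 * (b + c) * N ∧ (A.card : ℝ)^2 ≤ 2 * n ∧
      (252 ≤ Real.log (Real.log n) →
      ∃ u : ℝ, 0 ≤ u ∧ (A.card : ℝ)^2 = 8 * n * Real.exp (-u) ∧ Real.log (Real.log n) ≤ 684 * u^2) := by
  obtain ⟨p, hp, hlt, hle⟩ := Nat.exists_prime_lt_and_le_two_mul (4 * (b + c) * N) (by positivity)
  haveI : Fact p.Prime := ⟨hp⟩
  obtain ⟨A', γ, hγ, hγ1, hcard, hS, hsol⟩ := transfer b c hb hc N A hAN h1 h2 p hlt hN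
  have hsc := sidon_card A' hS
  rw [hcard, ZMod.card] at hsc
  refine ⟨p, ?_, by linarith, hsc, ?_⟩
  · have : 1 * N ≤ 4 * (b + c) * N := Nat.mul_le_mul_right _ (by omega)
    omega
  intro hlog
  apply analytic p A.card (by exact_mod_cast hA) hsc _ hlog
  intro ε hε M hM0 hM hB m α hα hm
  have := main_field (ZMod.stdAddChar (N := p)) (ZMod.isPrimitive_stdAddChar p) γ hγ hγ1 A' hS hsol
    (by rw [hcard]; exact hA) ε hε M hM0 hM (by rw [ZMod.card]; exact hB) m α
    (by rw [hcard, ZMod.card]; exact hα) hm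
  rw [hcard, ZMod.card] at this
  exact this

lemma final_bound (s : ℕ) (N : ℕ) (hN : 3 ≤ N) (K : ℝ) (hK : 0 ≤ K) (n : ℕ) (hNn : N ≤ n)
    (hn : n ≤ 8 * s * N) (hK2 : K^2 ≤ 2 * n)
    (H : 252 ≤ Real.log (Real.log n) →
      ∃ u : ℝ, 0 ≤ u ∧ K^2 = 8 * n * Real.exp (-u) ∧ Real.log (Real.log n) ≤ 684 * u^2) :
    K ≤ (8 * Real.sqrt s * Real.exp 252) * (N : ℝ) ^ ((1 : ℝ) / 2) *
        Real.exp (-(1/54) * (Real.log (Real.log N)) ^ ((1 : ℝ) / 7)) := by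
  rw [← Real.sqrt_eq_rpow]
  have hN3 : (3:ℝ) ≤ N := by exact_mod_cast hN
  have hNn' : (N:ℝ) ≤ n := by exact_mod_cast hNn
  have hn' : (n:ℝ) ≤ 8 * s * N := by exact_mod_cast hn
  have hlN : 1 < Real.log N := by
    rw [Real.lt_log_iff_exp_lt (by linarith)]
    linarith [Real.exp_one_lt_d9]
  have hll : 0 < Real.log (Real.log N) := Real.log_pos hlN
  have hlnn : Real.log (Real.log N) ≤ Real.log (Real.log n) :=
    Real.log_le_log (by linarith) (Real.log_le_log (by linarith) hNn')
  set l := Real.log (Real.log N) with hl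
  have hsq : (8 * Real.sqrt s * Real.sqrt N)^2 = 64 * s * N := by
    rw [mul_pow, mul_pow, Real.sq_sqrt (by positivity), Real.sq_sqrt (by positivity)]; ring
  by_cases hc : 252 ≤ l
  · obtain ⟨u, hu, hKu, hlu⟩ := H (hc.trans hlnn)
    have hlr : l ^ ((1:ℝ)/7) ≤ 27 * u := by
      have e1 : l ^ ((1:ℝ)/7) ≤ l ^ ((1:ℝ)/2) :=
        Real.rpow_le_rpow_of_exponent_le (by linarith) (by norm_num)
      rw [← Real.sqrt_eq_rpow] at e1
      refine e1.trans (Real.sqrt_le_iff.mpr ⟨by positivity, ?_⟩)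
      nlinarith [sq_nonneg u]
    have e1 : K ≤ (8 * Real.sqrt s * Real.sqrt N) * Real.exp (-u/2) := by
      apply le_of_sq_le_sq _ (by positivity)
      rw [mul_pow, hsq, hKu, ← Real.exp_nat_mul]
      have : ((2:ℕ):ℝ) * (-u/2) = -u := by push_cast; ring
      rw [this]
      exact mul_le_mul_of_nonneg_right (by linarith) (Real.exp_pos _).le
    calc K ≤ (8 * Real.sqrt s * Real.sqrt N) * Real.exp (-u/2) := e1
      _ ≤ (8 * Real.sqrt s * Real.sqrt N) * (Real.exp 252 * Real.exp (-(1/54) * l ^ ((1:ℝ)/7))) := by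
        rw [← Real.exp_add]
        gcongr
        linarith
      _ = _ := by ring
  · push Not at hc
    have hlr : l ^ ((1:ℝ)/7) ≤ 252 := by
      calc l ^ ((1:ℝ)/7) ≤ (252:ℝ) ^ ((1:ℝ)/7) := Real.rpow_le_rpow hll.le hc.le (by norm_num)
        _ ≤ (252:ℝ)^(1:ℝ) := Real.rpow_le_rpow_of_exponent_le (by norm_num) (by norm_num)
        _ = 252 := Real.rpow_one _
    have e1 : K ≤ 8 * Real.sqrt s * Real.sqrt N := by
      apply le_of_sq_le_sq _ (by positivity)
      rw [hsq]
      have : (0:ℝ) ≤ s * N := by positivity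
      linarith
    calc K ≤ (8 * Real.sqrt s * Real.sqrt N) * 1 := by linarith
      _ ≤ (8 * Real.sqrt s * Real.sqrt N) * (Real.exp 252 * Real.exp (-(1/54) * l ^ ((1:ℝ)/7))) := by
        rw [← Real.exp_add]
        gcongr
        apply Real.one_le_exp
        linarith
      _ = _ := by ring

/-- Let `k ≥ 4`, let `a₁,…,a_k` be positive integers and `a = a₁+⋯+a_k`. Then
there are constants `C, c > 0` such that for every `N ≥ 3`, every `A ⊆ [N]` containing no
non-trivial solutions (in the general sense: every solution with entries in `A` is trivial)
to `a₁x₁ + ⋯ + a_kx_k + a·y = a·z + a·w` satisfies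
`|A| ≤ C·N^{1/2}·exp(−c·(log log N)^{1/7})`. The coefficient vector is
`(a₁,…,a_k, a, −a, −a)` on the `k+3` variables. -/
theorem statement15 (k : ℕ) (hk : 4 ≤ k) (a : Fin k → ℕ) (ha : ∀ i, 0 < a i) :
    ∃ C c : ℝ, 0 < C ∧ 0 < c ∧ ∀ N : ℕ, 3 ≤ N → ∀ A : Finset ℤ,
      A ⊆ Finset.Icc 1 (N : ℤ) →
      (∀ v : Fin (k + 3) → ℤ, (∀ i, v i ∈ A) →
        (∑ i, (if h : i.val < k then (a ⟨i.val, h⟩ : ℤ)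
            else if i.val = k then (∑ j, (a j : ℤ)) else -(∑ j, (a j : ℤ))) * v i) = 0 →
        ∀ α : ℤ, (∑ i ∈ Finset.univ.filter (fun i => v i = α),
          (if h : i.val < k then (a ⟨i.val, h⟩ : ℤ)
            else if i.val = k then (∑ j, (a j : ℤ)) else -(∑ j, (a j : ℤ)))) = 0) →
      (A.card : ℝ) ≤ C * (N : ℝ) ^ ((1 : ℝ) / 2) *
        Real.exp (-c * (Real.log (Real.log N)) ^ ((1 : ℝ) / 7)) := by
  obtain ⟨k, rfl⟩ : ∃ k', k = k' + 1 := ⟨k - 1, by omega⟩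
  have hpos : 0 < ∑ j, a j := by
    apply Finset.sum_pos (fun i _ => ha _)
    exact ⟨0, Finset.mem_univ _⟩
  have hpos' : (0:ℝ) < ((∑ j, a j : ℕ) : ℝ) := by exact_mod_cast hpos
  refine ⟨8 * Real.sqrt ((∑ j, a j : ℕ) : ℝ) * Real.exp 252, 1/54, by positivity, by norm_num, ?_⟩
  intro N hN A hAN H
  rcases Nat.eq_zero_or_pos A.card with h0 | h0
  · rw [h0, Nat.cast_zero]
    positivity
  obtain ⟨b, c, hb, hc, hbc, h1, h2⟩ := int_sol k (by omega) a ha A H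
  obtain ⟨n, hn1, hn2, hn3, hn4⟩ := count_bound b c hb hc N A hAN h1 h2 hN h0
  rw [hbc] at hn2
  exact final_bound _ N hN _ (Nat.cast_nonneg _) n hn1 hn2 hn3 hn4
end
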